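/- arXiv:1102.1910 — 9 statements merged into one kernel-verified Lean document; each statement's English description precedes it below -/
import Mathlib

section
/- Let n ≥ 1, let X ⊂ ℝ^n be a nonempty compact set and let f : X → X be a continuous map with modulus of continuity ω. Suppose there exist an integer m ≥ 2 and δ > 0 such that f has the (m,δ)-separated preimage property on X. Let h : (0,η] → (0,∞) be a gauge function, and suppose that for all sufficiently large k ∈ ℕ there exists t_k ∈ (0,η] with h(t_k) = 1/m^k and ω^k(t_k) ≤ δ/2, where ω^k denotes the k-fold iterate of ω. Then the generalized Hausdorff measure satisfies H_h(X) > 0. -/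
open MeasureTheory Metric Set Filter

def sepTransfer {E : Type*} {m : ℕ} (g : E → Fin m → E) (φ : E → ℝ) : E → ℝ :=
  fun y => ∑ i, φ (g y i)

lemma sepTransfer_mono {E : Type*} {m : ℕ} (g : E → Fin m → E) (X : Set E)
    (hg : ∀ y ∈ X, ∀ i, g y i ∈ X) (n : ℕ) (φ ψ : E → ℝ) (hle : ∀ y ∈ X, φ y ≤ ψ y) :
    ∀ y ∈ X, (sepTransfer g)^[n] φ y ≤ (sepTransfer g)^[n] ψ y := by
  induction n with
  | zero => simpa using hle
  | succ n ih =>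
    intro y hy
    rw [Function.iterate_succ_apply', Function.iterate_succ_apply']
    exact Finset.sum_le_sum fun i _ => ih _ (hg y hy i)

lemma sepTransfer_const {E : Type*} {m : ℕ} (g : E → Fin m → E) (n : ℕ) (c : ℝ) (y : E) :
    (sepTransfer g)^[n] (fun _ => c) y = (m : ℝ) ^ n * c := by
  induction n generalizing y with
  | zero => simp
  | succ n ih =>
    rw [Function.iterate_succ_apply']
    simp only [sepTransfer, ih]
    simp only [Finset.sum_const, Finset.card_univ, Fintype.card_fin, nsmul_eq_mul]
    ring

lemma sepTransfer_sum {E ι : Type*} {m : ℕ} (g : E → Fin m → E) (n : ℕ) (J : Finset ι)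
    (φ : ι → E → ℝ) (y : E) :
    (sepTransfer g)^[n] (fun y => ∑ j ∈ J, φ j y) y = ∑ j ∈ J, (sepTransfer g)^[n] (φ j) y := by
  induction n generalizing y with
  | zero => simp
  | succ n ih =>
    simp only [Function.iterate_succ_apply']
    simp only [sepTransfer, ih]
    rw [Finset.sum_comm]

lemma sepTransfer_ne_zero {E : Type*} {m : ℕ} (g : E → Fin m → E) (X : Set E) (f : E → E)
    (hg : ∀ y ∈ X, ∀ i, g y i ∈ X ∧ f (g y i) = y) (U : Set E) (n : ℕ) :
    ∀ y ∈ X, (sepTransfer g)^[n] (U.indicator 1) y ≠ 0 → ∃ x ∈ U ∩ X, f^[n] x = y := by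
  induction n with
  | zero =>
    intro y hy hne
    exact ⟨y, ⟨Set.mem_of_indicator_ne_zero hne, hy⟩, rfl⟩
  | succ n ih =>
    intro y hy hne
    rw [Function.iterate_succ_apply'] at hne
    obtain ⟨i, -, hi⟩ := Finset.exists_ne_zero_of_sum_ne_zero hne
    obtain ⟨x, hx, hxy⟩ := ih _ (hg y hy i).1 hi
    exact ⟨x, hx, by rw [Function.iterate_succ_apply', hxy, (hg y hy i).2]⟩

lemma sepTransfer_le_one {E : Type*} [MetricSpace E] {m : ℕ} (g : E → Fin m → E) (X : Set E)
    (f : E → E) (hg : ∀ y ∈ X, ∀ i, g y i ∈ X ∧ f (g y i) = y) (δ : ℝ)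
    (hd : ∀ y ∈ X, ∀ i j, i ≠ j → δ ≤ dist (g y i) (g y j)) (U : Set E) (k : ℕ)
    (hU : ∀ x ∈ U ∩ X, ∀ x' ∈ U ∩ X, ∀ i < k, dist (f^[i] x) (f^[i] x') < δ) :
    ∀ y ∈ X, (sepTransfer g)^[k] (U.indicator 1) y ≤ 1 := by
  induction k with
  | zero =>
    intro y _
    by_cases h : y ∈ U <;> simp [h]
  | succ k ih =>
    intro y hy
    have ih' := ih (fun x hx x' hx' i hi => hU x hx x' hx' i (by omega))
    rw [Function.iterate_succ_apply']
    by_cases hz : ∃ i, (sepTransfer g)^[k] (U.indicator 1) (g y i) ≠ 0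
    · obtain ⟨i, hi⟩ := hz
      obtain ⟨x, hx, hxy⟩ := sepTransfer_ne_zero g X f hg U k _ (hg y hy i).1 hi
      have : sepTransfer g ((sepTransfer g)^[k] (U.indicator 1)) y
          = (sepTransfer g)^[k] (U.indicator 1) (g y i) := by
        refine Finset.sum_eq_single i ?_ (by simp)
        intro j _ hj
        by_contra hne
        obtain ⟨x', hx', hxy'⟩ := sepTransfer_ne_zero g X f hg U k _ (hg y hy j).1 hne
        have h1 := hU x hx x' hx' k (by omega)
        rw [hxy, hxy'] at h1
        exact absurd (hd y hy i j (Ne.symm hj)) (not_le.mpr h1)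
      rw [this]
      exact ih' _ (hg y hy i).1
    · push Not at hz
      have : sepTransfer g ((sepTransfer g)^[k] (U.indicator 1)) y = 0 :=
        Finset.sum_eq_zero fun i _ => hz i
      rw [this]; exact zero_le_one

lemma sep_cover_count {E ι : Type*} [MetricSpace E] {m : ℕ} (hm : 2 ≤ m) (g : E → Fin m → E)
    (X : Set E) (hX : X.Nonempty)
    (f : E → E) (hg : ∀ y ∈ X, ∀ i, g y i ∈ X ∧ f (g y i) = y) (δ : ℝ)
    (hd : ∀ y ∈ X, ∀ i j, i ≠ j → δ ≤ dist (g y i) (g y j)) (J : Finset ι) (U : ι → Set E)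
    (k : ι → ℕ)
    (hU : ∀ j, ∀ x ∈ U j ∩ X, ∀ x' ∈ U j ∩ X, ∀ i < k j, dist (f^[i] x) (f^[i] x') < δ)
    (hc : X ⊆ ⋃ j ∈ J, U j) :
    (1 : ℝ) ≤ ∑ j ∈ J, 1 / (m : ℝ) ^ k j := by
  obtain ⟨y, hy⟩ := hX
  have hm0 : (0 : ℝ) < m := by exact_mod_cast (by omega : 0 < m)
  set N := J.sup k with hN
  have h1 : (sepTransfer g)^[N] (fun _ => (1 : ℝ)) y
      ≤ (sepTransfer g)^[N] (fun y => ∑ j ∈ J, (U j).indicator 1 y) y := by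
    refine sepTransfer_mono g X (fun y hy i => (hg y hy i).1) N _ _ ?_ y hy
    intro z hz
    obtain ⟨j, hj, hzj⟩ := Set.mem_iUnion₂.mp (hc hz)
    have : (U j).indicator (1 : E → ℝ) z = 1 := by simp [hzj]
    rw [← this]
    exact Finset.single_le_sum (f := fun j => (U j).indicator (1 : E → ℝ) z)
      (fun i _ => Set.indicator_nonneg (fun _ _ => zero_le_one) _) hj
  rw [sepTransfer_const, sepTransfer_sum] at h1
  have h2 : ∑ j ∈ J, (sepTransfer g)^[N] ((U j).indicator 1) y
      ≤ ∑ j ∈ J, (m : ℝ) ^ N * (1 / (m : ℝ) ^ k j) := by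
    refine Finset.sum_le_sum fun j hj => ?_
    have hle : k j ≤ N := Finset.le_sup hj
    obtain ⟨l, hl⟩ := Nat.exists_eq_add_of_le' hle
    have e : (m : ℝ) ^ N * (1 / (m : ℝ) ^ k j) = (m : ℝ) ^ l * 1 := by
      rw [hl, pow_add]; field_simp
    rw [e, hl, Function.iterate_add_apply, ← sepTransfer_const g l 1 y]
    exact sepTransfer_mono g X (fun y hy i => (hg y hy i).1) l _ _
      (sepTransfer_le_one g X f hg δ hd (U j) (k j) (hU j)) y hy
  rw [← Finset.mul_sum] at h2
  exact le_of_mul_le_mul_left (h1.trans h2) (by positivity)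

lemma sep_iterate_lt (ω : ℝ → ℝ) (hω : StrictMonoOn ω (Set.Ici 0))
    (hnn : ∀ t, 0 ≤ t → 0 ≤ ω t) (δ t : ℝ) (hδ : 0 < δ) (ht : 0 ≤ t) (htδ : t < δ) (k : ℕ)
    (hk : ω^[k] t ≤ δ / 2) : ∀ i ≤ k, 0 ≤ ω^[i] t ∧ ω^[i] t < δ := by
  have h0 : ∀ i, 0 ≤ ω^[i] t := by
    intro i
    induction i with
    | zero => exact ht
    | succ i ih => rw [Function.iterate_succ_apply']; exact hnn _ ih
  intro i hi
  refine ⟨h0 i, ?_⟩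
  rcases le_total t (ω t) with h | h
  · have : Monotone fun i => ω^[i] t := by
      refine monotone_nat_of_le_succ fun n => ?_
      induction n with
      | zero => exact h
      | succ n ih =>
        rw [Function.iterate_succ_apply', Function.iterate_succ_apply' ω (n+1)]
        exact hω.monotoneOn (h0 _) (h0 _) ih
    have := this hi
    simp only at this
    linarith
  · have : Antitone fun i => ω^[i] t := by
      refine antitone_nat_of_succ_le fun n => ?_
      induction n with
      | zero => exact h
      | succ n ih =>
        rw [Function.iterate_succ_apply' ω n, Function.iterate_succ_apply' ω (n+1)]
        exact hω.monotoneOn (h0 _) (h0 _) ih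
    have := this (Nat.zero_le i)
    simp only [Function.iterate_zero, id] at this
    linarith

/-- Enlarging a small set to an open set of controlled scale. -/
lemma sep_enlarge {E : Type*} [MetricSpace E] (m : ℕ) (hm : 2 ≤ m) (η : ℝ) (h : ℝ → ℝ)
    (hmono : StrictMonoOn h (Set.Ioc 0 η)) (hpos : ∀ t ∈ Set.Ioc 0 η, 0 < h t)
    (K : ℕ) (t : ℕ → ℝ) (ht : ∀ k ≥ K, t k ∈ Set.Ioc 0 η ∧ h (t k) = 1 / (m : ℝ) ^ k)
    (A : Set E) (hA : ediam A ≤ ENNReal.ofReal (t K / 2)) (ε : ENNReal) (hε : ε ≠ 0) :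
    ∃ k ≥ K, ∃ U : Set E, IsOpen U ∧ A ⊆ U ∧ (∀ x ∈ U, ∀ y ∈ U, dist x y ≤ t k) ∧
      ENNReal.ofReal (1 / (m : ℝ) ^ k) ≤
        m * (⨆ _ : A.Nonempty, ENNReal.ofReal (h (ediam A).toReal)) + ε := by
  have hm0 : (0 : ℝ) < m := by exact_mod_cast (by omega : 0 < m)
  have hfin : ediam A ≠ ⊤ := ne_top_of_le_ne_top ENNReal.ofReal_ne_top hA
  have hlim : Tendsto (fun k : ℕ => 1 / (m : ℝ) ^ k) atTop (nhds 0) := by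
    have := tendsto_pow_atTop_nhds_zero_of_lt_one (r := 1 / (m : ℝ)) (by positivity)
      (by rw [div_lt_one hm0]; exact_mod_cast (by omega : 1 < m))
    simpa using this
  have key : ∀ k ≥ K, (ediam A).toReal < t k → ∃ U : Set E, IsOpen U ∧ A ⊆ U ∧
      (∀ x ∈ U, ∀ y ∈ U, dist x y ≤ t k) := by
    intro k _ hd
    refine ⟨Metric.thickening ((t k - (ediam A).toReal) / 2) A, Metric.isOpen_thickening,
      Metric.self_subset_thickening (by linarith) A, ?_⟩
    intro x hx y hy
    obtain ⟨a, ha, hxa⟩ := Metric.mem_thickening_iff.mp hx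
    obtain ⟨b, hb, hyb⟩ := Metric.mem_thickening_iff.mp hy
    have hab : dist a b ≤ (ediam A).toReal := by
      rw [dist_edist]
      exact ENNReal.toReal_mono hfin (Metric.edist_le_ediam_of_mem ha hb)
    have := dist_triangle4 x a b y
    rw [dist_comm b y] at this
    linarith
  set d := (ediam A).toReal with hd
  have hd0 : 0 ≤ d := ENNReal.toReal_nonneg
  have htK := ht K le_rfl
  have hdK : d ≤ t K / 2 := ENNReal.toReal_le_of_le_ofReal (by linarith [htK.1.1]) hA
  rcases hd0.eq_or_lt with h0 | h0
  · have h1 : Tendsto (fun k : ℕ => ENNReal.ofReal (1 / (m : ℝ) ^ k)) atTop (nhds 0) := by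
      simpa using ENNReal.tendsto_ofReal hlim
    obtain ⟨k, hkε, hkK⟩ := ((h1.eventually (gt_mem_nhds (pos_iff_ne_zero.mpr hε))).and
      (eventually_ge_atTop K)).exists
    obtain ⟨U, hU1, hU2, hU3⟩ := key k hkK (by rw [← h0]; exact (ht k hkK).1.1)
    exact ⟨k, hkK, U, hU1, hU2, hU3, hkε.le.trans le_add_self⟩
  · have hdm : d ∈ Set.Ioc 0 η := ⟨h0, by linarith [htK.1.1, htK.1.2]⟩
    have hne : A.Nonempty := by
      by_contra hne
      rw [Set.not_nonempty_iff_eq_empty] at hne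
      rw [hd, hne] at h0
      simp at h0
    have hex : ∃ k, K ≤ k ∧ 1 / (m : ℝ) ^ (k + 1) ≤ h d := by
      obtain ⟨k, hk1, hk2⟩ := (((hlim.comp (tendsto_add_atTop_nat 1)).eventually
        (gt_mem_nhds (hpos d hdm))).and (eventually_ge_atTop K)).exists
      exact ⟨k, hk2, hk1.le⟩
    classical
    obtain ⟨hkK, hk⟩ := Nat.find_spec hex
    have hmin := fun j => Nat.find_min (m := j) hex
    set k := Nat.find hex
    have hlt : d < t k := by
      rcases hkK.eq_or_lt with e | e
      · rw [← e]; linarith [htK.1.1]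
      · have := hmin (k - 1) (by omega)
        rw [not_and, not_le, show k - 1 + 1 = k by omega] at this
        have := this (by omega)
        rw [← (ht k hkK).2] at this
        exact (hmono.lt_iff_lt hdm (ht k hkK).1).mp this
    obtain ⟨U, hU1, hU2, hU3⟩ := key k hkK hlt
    refine ⟨k, hkK, U, hU1, hU2, hU3, le_trans ?_ le_self_add⟩
    simp only [hne, iSup_pos]
    rw [← ENNReal.ofReal_natCast, ← ENNReal.ofReal_mul hm0.le]
    apply ENNReal.ofReal_le_ofReal
    calc 1 / (m : ℝ) ^ k = m * (1 / (m : ℝ) ^ (k + 1)) := by rw [pow_succ]; field_simp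
      _ ≤ _ := by gcongr

/-- If a continuous self-map of a nonempty compact set `X ⊆ ℝⁿ` with modulus
of continuity `ω` has the `(m,δ)`-separated preimage property, and `h` is a gauge function on
`(0, η]` such that for all large `k` there is `t_k ∈ (0, η]` with `h t_k = 1/m^k` and
`ω^[k] t_k ≤ δ/2`, then the generalized Hausdorff measure `H_h(X)` is positive. -/
theorem hausdorff_gauge_measure_pos_of_separated_preimages
    (n : ℕ) (hn : 1 ≤ n)
    (X : Set (EuclideanSpace ℝ (Fin n))) (hXne : X.Nonempty) (hXc : IsCompact X)
    (f : EuclideanSpace ℝ (Fin n) → EuclideanSpace ℝ (Fin n))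
    (hfc : ContinuousOn f X) (hfX : Set.MapsTo f X X)
    (ω : ℝ → ℝ) (hωmono : StrictMonoOn ω (Set.Ici 0))
    (hωcont : ContinuousOn ω (Set.Ici 0))
    (hω0 : ω 0 = 0) (hωnonneg : ∀ t, 0 ≤ t → 0 ≤ ω t)
    (hωmod : ∀ x ∈ X, ∀ y ∈ X, dist (f x) (f y) ≤ ω (dist x y))
    (m : ℕ) (hm : 2 ≤ m) (δ : ℝ) (hδ : 0 < δ)
    (hsep : ∀ y ∈ X, ∃ x : Fin m → EuclideanSpace ℝ (Fin n),
      (∀ i, x i ∈ X ∧ f (x i) = y) ∧ ∀ i j, i ≠ j → δ ≤ dist (x i) (x j))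
    (η : ℝ) (hη : 0 < η) (h : ℝ → ℝ)
    (hmono : StrictMonoOn h (Set.Ioc 0 η)) (hcont : ContinuousOn h (Set.Ioc 0 η))
    (hpos : ∀ t ∈ Set.Ioc 0 η, 0 < h t)
    (hlim : Filter.Tendsto h (nhdsWithin 0 (Set.Ioi 0)) (nhds 0))
    (hk : ∀ᶠ k : ℕ in Filter.atTop, ∃ t ∈ Set.Ioc (0:ℝ) η,
      h t = 1 / (m : ℝ) ^ k ∧ ω^[k] t ≤ δ / 2) :
    0 < MeasureTheory.Measure.mkMetric (fun d => ENNReal.ofReal (h d.toReal)) X := by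
  classical
  have hm0 : (0 : ℝ) < m := by exact_mod_cast (by omega : 0 < m)
  choose! g hg hgd using hsep
  have hlimm : Tendsto (fun k : ℕ => 1 / (m : ℝ) ^ k) atTop (nhds 0) := by
    have := tendsto_pow_atTop_nhds_zero_of_lt_one (r := 1 / (m : ℝ)) (by positivity)
      (by rw [div_lt_one hm0]; exact_mod_cast (by omega : 1 < m))
    simpa using this
  have he : min (δ / 2) η ∈ Set.Ioc 0 η := ⟨lt_min (by linarith) hη, min_le_right _ _⟩
  obtain ⟨K, hK⟩ := eventually_atTop.mp
    (hk.and (hlimm.eventually (gt_mem_nhds (hpos _ he))))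
  choose! t ht using fun k hk => (hK k hk).1
  have htδ : ∀ k ≥ K, t k < δ := by
    intro k hkK
    have h1 := (hK k hkK).2
    rw [← (ht k hkK).2.1] at h1
    have := (hmono.lt_iff_lt (ht k hkK).1 he).mp h1
    linarith [min_le_left (δ / 2) η]
  have htK := (ht K le_rfl).1
  have hgood : ∀ k ≥ K, ∀ x ∈ X, ∀ y ∈ X, dist x y ≤ t k → ∀ i ≤ k,
      dist (f^[i] x) (f^[i] y) < δ := by
    intro k hkK x hx y hy hxy i hi
    have hit := sep_iterate_lt ω hωmono hωnonneg δ (t k) hδ (ht k hkK).1.1.le (htδ k hkK) k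
      (ht k hkK).2.2
    refine lt_of_le_of_lt ?_ (hit i hi).2
    induction i with
    | zero => exact hxy
    | succ i ih =>
      have := ih (by omega)
      rw [Function.iterate_succ_apply', Function.iterate_succ_apply',
        Function.iterate_succ_apply']
      exact (hωmod _ (hfX.iterate i hx) _ (hfX.iterate i hy)).trans
        (hωmono.monotoneOn dist_nonneg (hit i (by omega)).1 this)
  have hbound : (2 * m : ENNReal)⁻¹ ≤
      MeasureTheory.Measure.mkMetric (fun d => ENNReal.ofReal (h d.toReal)) X := by
    rw [Measure.mkMetric_apply]
    refine le_iSup₂_of_le (ENNReal.ofReal (t K / 2))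
      (ENNReal.ofReal_pos.mpr (by linarith [htK.1])) ?_
    refine le_iInf fun A => le_iInf fun hXA => le_iInf fun hA => ?_
    obtain ⟨ε, hε, hεs⟩ := ENNReal.exists_pos_sum_of_countable'
      (ε := 2⁻¹) (by simp) ℕ
    choose k hkK U hUo hAU hUd hUc using fun j => sep_enlarge m hm η h hmono hpos K t
      (fun k hk => ⟨(ht k hk).1, (ht k hk).2.1⟩) (A j) (hA j) (ε j) (hε j).ne'
    obtain ⟨J, hJ⟩ := hXc.elim_finite_subcover U hUo
      (hXA.trans (Set.iUnion_mono hAU))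
    have hcount := sep_cover_count hm g X hXne f hg δ hgd J U k
      (fun j x hx x' hx' i hi => hgood (k j) (hkK j) x hx.2 x' hx'.2
        (hUd j x hx.1 x' hx'.1) i hi.le) hJ
    set S := ∑' j, ⨆ _ : (A j).Nonempty, ENNReal.ofReal (h (ediam (A j)).toReal) with hS
    have h1 : (1 : ENNReal) ≤ m * S + 2⁻¹ := by
      calc (1 : ENNReal) = ENNReal.ofReal 1 := by simp
        _ ≤ ENNReal.ofReal (∑ j ∈ J, 1 / (m : ℝ) ^ k j) := ENNReal.ofReal_le_ofReal hcount
        _ = ∑ j ∈ J, ENNReal.ofReal (1 / (m : ℝ) ^ k j) :=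
          ENNReal.ofReal_sum_of_nonneg fun j _ => by positivity
        _ ≤ ∑' j, ENNReal.ofReal (1 / (m : ℝ) ^ k j) := ENNReal.sum_le_tsum J
        _ ≤ ∑' j, (m * (⨆ _ : (A j).Nonempty, ENNReal.ofReal (h (ediam (A j)).toReal)) + ε j) :=
          ENNReal.tsum_le_tsum hUc
        _ = m * S + ∑' j, ε j := by rw [ENNReal.tsum_add, ENNReal.tsum_mul_left]
        _ ≤ m * S + 2⁻¹ := by gcongr
    have h2 : (2 : ENNReal)⁻¹ ≤ m * S := by
      rw [← ENNReal.inv_two_add_inv_two] at h1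
      exact (ENNReal.add_le_add_iff_right (by simp)).mp h1
    rw [ENNReal.mul_inv (by simp) (by simp), ← div_eq_mul_inv]
    refine ENNReal.div_le_of_le_mul ?_
    rwa [mul_comm]
  refine lt_of_lt_of_le ?_ hbound
  rw [ENNReal.inv_pos]
  exact ENNReal.mul_ne_top (by simp) (by simp)
end

section
/- Let n ≥ 1, let X ⊂ ℝ^n be a nonempty compact set and let f : X → X be a continuous map. Suppose there exist an integer m ≥ 2 and δ > 0 such that f has the (m,δ)-separated preimage property on X. If f is Lipschitz continuous with Lipschitz constant L > 1, i.e. |f(x) − f(y)| ≤ L|x − y| for all x, y ∈ X, then the Hausdorff dimension of X satisfies dim X ≥ (log m)/(log L). -/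
open MeasureTheory Metric Set

open Classical in
/-- number of depth `N` tree leaves above `y` in `U` -/
noncomputable def leafCount {E : Type*} {m : ℕ} (g : E → Fin m → E) (U : Set E) : ℕ → E → ℕ
  | 0, y => if y ∈ U then 1 else 0
  | N + 1, y => ∑ i, leafCount g U N (g y i)

lemma leafCount_pos {E : Type*} {m : ℕ} (g : E → Fin m → E) (f : E → E) (X U : Set E)
    (hg : ∀ y ∈ X, ∀ i, g y i ∈ X ∧ f (g y i) = y) (N : ℕ) :
    ∀ y ∈ X, leafCount g U N y ≠ 0 → ∃ a ∈ X, a ∈ U ∧ f^[N] a = y := by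
  induction N with
  | zero =>
    intro y hy h
    refine ⟨y, hy, ?_, rfl⟩
    by_contra hc
    simp [leafCount, hc] at h
  | succ N ih =>
    intro y hy h
    obtain ⟨i, -, hi⟩ := Finset.exists_ne_zero_of_sum_ne_zero h
    obtain ⟨a, haX, haU, ha⟩ := ih _ (hg y hy i).1 hi
    exact ⟨a, haX, haU, by rw [Function.iterate_succ_apply', ha, (hg y hy i).2]⟩

lemma leafCount_le_one {E : Type*} [PseudoMetricSpace E] {m : ℕ} (g : E → Fin m → E) (f : E → E)
    (X U : Set E) (L δ : ℝ)
    (hg : ∀ y ∈ X, ∀ i, g y i ∈ X ∧ f (g y i) = y)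
    (hgs : ∀ y ∈ X, ∀ i j, i ≠ j → δ ≤ dist (g y i) (g y j))
    (hlip : ∀ N, ∀ x ∈ X, ∀ y ∈ X, dist (f^[N] x) (f^[N] y) ≤ L ^ N * dist x y)
    (k : ℕ) (hU : ∀ j < k, ∀ a ∈ U, ∀ b ∈ U, L ^ j * dist a b < δ) (N : ℕ) (hN : N ≤ k) :
    ∀ y ∈ X, leafCount g U N y ≤ 1 := by
  induction N with
  | zero => intro y hy; simp only [leafCount]; split_ifs <;> simp
  | succ N ih =>
    intro y hy
    have ih := ih (by omega)
    show ∑ i, leafCount g U N (g y i) ≤ 1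
    by_cases h : ∃ i, leafCount g U N (g y i) ≠ 0
    · obtain ⟨i, hi⟩ := h
      rw [Finset.sum_eq_single i]
      · exact ih _ (hg y hy i).1
      · intro j _ hj
        by_contra hc
        obtain ⟨a, haX, haU, ha⟩ := leafCount_pos g f X U hg N _ (hg y hy i).1 hi
        obtain ⟨b, hbX, hbU, hb⟩ := leafCount_pos g f X U hg N _ (hg y hy j).1 hc
        have h1 := hgs y hy i j (Ne.symm hj)
        rw [← ha, ← hb] at h1
        have h2 := hlip N a haX b hbX
        have h3 := hU N (by omega) a haU b hbU
        linarith
      · simp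
    · push Not at h
      simp [h]

lemma leafCount_le_pow {E : Type*} [PseudoMetricSpace E] {m : ℕ} (g : E → Fin m → E) (f : E → E)
    (X U : Set E) (L δ : ℝ)
    (hg : ∀ y ∈ X, ∀ i, g y i ∈ X ∧ f (g y i) = y)
    (hgs : ∀ y ∈ X, ∀ i j, i ≠ j → δ ≤ dist (g y i) (g y j))
    (hlip : ∀ N, ∀ x ∈ X, ∀ y ∈ X, dist (f^[N] x) (f^[N] y) ≤ L ^ N * dist x y)
    (k : ℕ) (hU : ∀ j < k, ∀ a ∈ U, ∀ b ∈ U, L ^ j * dist a b < δ) (M : ℕ) :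
    ∀ y ∈ X, leafCount g U (k + M) y ≤ m ^ M := by
  induction M with
  | zero => simpa using leafCount_le_one g f X U L δ hg hgs hlip k hU k le_rfl
  | succ M ih =>
    intro y hy
    show ∑ i, leafCount g U (k + M) (g y i) ≤ _
    calc _ ≤ ∑ i : Fin m, m ^ M := Finset.sum_le_sum fun i _ => ih _ (hg y hy i).1
      _ = _ := by simp [pow_succ, mul_comm]

lemma pow_le_sum_leafCount {E ι : Type*} {m : ℕ} (g : E → Fin m → E) (f : E → E)
    (X : Set E) (F : Finset ι) (U : ι → Set E) (hX : X ⊆ ⋃ i ∈ F, U i)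
    (hg : ∀ y ∈ X, ∀ i, g y i ∈ X ∧ f (g y i) = y) (N : ℕ) :
    ∀ y ∈ X, m ^ N ≤ ∑ i ∈ F, leafCount g (U i) N y := by
  induction N with
  | zero =>
    intro y hy
    obtain ⟨i, hi, hyi⟩ := mem_iUnion₂.1 (hX hy)
    calc m ^ 0 = leafCount g (U i) 0 y := by simp [leafCount, hyi]
      _ ≤ _ := Finset.single_le_sum (f := fun i => leafCount g (U i) 0 y)
        (fun _ _ => Nat.zero_le _) hi
  | succ N ih =>
    intro y hy
    show _ ≤ ∑ i ∈ F, ∑ j, leafCount g (U i) N (g y j)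
    rw [Finset.sum_comm]
    calc m ^ (N + 1) = ∑ j : Fin m, m ^ N := by simp [pow_succ, mul_comm]
      _ ≤ _ := Finset.sum_le_sum fun i _ => ih _ (hg y hy i).1

lemma one_le_sum_cover {E ι : Type*} [PseudoMetricSpace E] {m : ℕ} (hm : 2 ≤ m)
    (g : E → Fin m → E) (f : E → E)
    (X : Set E) (hXne : X.Nonempty) (L δ : ℝ)
    (hg : ∀ y ∈ X, ∀ i, g y i ∈ X ∧ f (g y i) = y)
    (hgs : ∀ y ∈ X, ∀ i j, i ≠ j → δ ≤ dist (g y i) (g y j))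
    (hlip : ∀ N, ∀ x ∈ X, ∀ y ∈ X, dist (f^[N] x) (f^[N] y) ≤ L ^ N * dist x y)
    (F : Finset ι) (U : ι → Set E) (hX : X ⊆ ⋃ i ∈ F, U i) (k : ι → ℕ)
    (hU : ∀ i, ∀ j < k i, ∀ a ∈ U i, ∀ b ∈ U i, L ^ j * dist a b < δ) :
    1 ≤ ∑ i ∈ F, ((m : ℝ)⁻¹) ^ (k i) := by
  obtain ⟨y, hy⟩ := hXne
  set N := F.sup k with hN
  have hm0 : (0 : ℝ) < m := by positivity
  have h1 : (m : ℝ) ^ N ≤ ∑ i ∈ F, (leafCount g (U i) N y : ℝ) := by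
    exact_mod_cast pow_le_sum_leafCount g f X F U hX hg N y hy
  have h2 : ∑ i ∈ F, (leafCount g (U i) N y : ℝ) ≤ ∑ i ∈ F, (m : ℝ) ^ N * ((m : ℝ)⁻¹) ^ (k i) := by
    apply Finset.sum_le_sum
    intro i hi
    obtain ⟨M, hM⟩ := Nat.exists_eq_add_of_le (Finset.le_sup (f := k) hi)
    rw [← hN] at hM
    have := leafCount_le_pow g f X (U i) L δ hg hgs hlip (k i) (hU i) M y hy
    rw [hM]
    calc (leafCount g (U i) (k i + M) y : ℝ) ≤ (m : ℝ) ^ M := by exact_mod_cast this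
      _ = _ := by rw [pow_add, inv_pow]; field_simp
  rw [← Finset.mul_sum] at h2
  have h3 : (0 : ℝ) < (m : ℝ) ^ N := by positivity
  by_contra hc
  push Not at hc
  nlinarith

lemma exists_exponent {m : ℕ} (hm : 2 ≤ m) {L δ D : ℝ} (hL : 1 < L) (hδ : 0 < δ) (hD : 0 ≤ D)
    (hDδ : D < δ) (e : ℕ) :
    ∃ k : ℕ, ((m : ℝ)⁻¹) ^ k ≤ (D / δ) ^ (Real.log m / Real.log L) + (1 / 2) ^ e ∧
      ∀ j < k, L ^ j * D < δ := by
  have hm0 : (2 : ℝ) ≤ m := by exact_mod_cast hm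
  rcases hD.eq_or_lt with rfl | hD
  · refine ⟨e, ?_, fun j _ => by simpa using hδ⟩
    have : ((m : ℝ)⁻¹) ^ e ≤ (1 / 2) ^ e := by
      apply pow_le_pow_left₀ (by positivity)
      rw [one_div]
      exact inv_anti₀ (by norm_num) hm0
    have h0 : 0 ≤ (0 / δ) ^ (Real.log m / Real.log L) := Real.rpow_nonneg (by simp) _
    linarith
  · have hex : ∃ k : ℕ, δ ≤ L ^ k * D := by
      obtain ⟨k, hk⟩ := pow_unbounded_of_one_lt (δ / D) hL
      exact ⟨k, by rw [div_lt_iff₀ hD] at hk; exact hk.le⟩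
    classical
    refine ⟨Nat.find hex, ?_, fun j hj => not_le.1 (Nat.find_min hex hj)⟩
    have h := Nat.find_spec hex
    set k := Nat.find hex
    have hlL : 0 < Real.log L := Real.log_pos hL
    have hlm : 0 < Real.log m := Real.log_pos (by linarith)
    have hLd : L ^ (Real.log m / Real.log L) = m := by
      rw [Real.rpow_def_of_pos (by linarith), mul_div_cancel₀ _ hlL.ne', Real.exp_log (by linarith)]
    have hk : ((m : ℝ)⁻¹) ^ k ≤ (D / δ) ^ (Real.log m / Real.log L) := by
      calc ((m : ℝ)⁻¹) ^ k = ((L⁻¹) ^ k) ^ (Real.log m / Real.log L) := by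
            rw [← Real.rpow_natCast (L⁻¹), ← Real.rpow_mul (by positivity), mul_comm,
              Real.rpow_mul (by positivity), Real.inv_rpow (by positivity), hLd, Real.rpow_natCast]
        _ ≤ _ := by
            apply Real.rpow_le_rpow (by positivity) _ (by positivity)
            rw [inv_pow, inv_le_iff_one_le_mul₀ (by positivity), div_mul_eq_mul_div,
              le_div_iff₀ hδ]
            linarith
    have : (0 : ℝ) ≤ (1 / 2) ^ e := by positivity
    linarith

/-- If a continuous self-map of a nonempty compact set `X ⊆ ℝⁿ` has the
`(m,δ)`-separated preimage property and is Lipschitz with constant `L > 1`, then the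
Hausdorff dimension of `X` is at least `log m / log L`. -/
theorem dimH_ge_of_separated_preimages_lipschitz
    (n : ℕ) (hn : 1 ≤ n)
    (X : Set (EuclideanSpace ℝ (Fin n))) (hXne : X.Nonempty) (hXc : IsCompact X)
    (f : EuclideanSpace ℝ (Fin n) → EuclideanSpace ℝ (Fin n))
    (hfc : ContinuousOn f X) (hfX : Set.MapsTo f X X)
    (m : ℕ) (hm : 2 ≤ m) (δ : ℝ) (hδ : 0 < δ)
    (hsep : ∀ y ∈ X, ∃ x : Fin m → EuclideanSpace ℝ (Fin n),
      (∀ i, x i ∈ X ∧ f (x i) = y) ∧ ∀ i j, i ≠ j → δ ≤ dist (x i) (x j))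
    (L : ℝ) (hL : 1 < L)
    (hlip : ∀ x ∈ X, ∀ y ∈ X, dist (f x) (f y) ≤ L * dist x y) :
    ENNReal.ofReal (Real.log m / Real.log L) ≤ dimH X := by
  have hm0 : (2 : ℝ) ≤ m := by exact_mod_cast hm
  have hd : 0 < Real.log m / Real.log L :=
    div_pos (Real.log_pos (by linarith)) (Real.log_pos hL)
  by_contra hlt
  push Not at hlt
  have hL0 : 0 < L := by linarith
  -- iterates
  have hlipN : ∀ N, ∀ x ∈ X, ∀ y ∈ X, dist (f^[N] x) (f^[N] y) ≤ L ^ N * dist x y := by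
    intro N
    induction N with
    | zero => intro x _ y _; simp
    | succ N ih =>
      intro x hx y hy
      rw [Function.iterate_succ_apply, Function.iterate_succ_apply]
      calc _ ≤ L ^ N * dist (f x) (f y) := ih _ (hfX hx) _ (hfX hy)
        _ ≤ L ^ N * (L * dist x y) := by gcongr; exact hlip x hx y hy
        _ = _ := by ring
  have hg' : ∀ y, ∃ x : Fin m → EuclideanSpace ℝ (Fin n), y ∈ X →
      (∀ i, x i ∈ X ∧ f (x i) = y) ∧ ∀ i j, i ≠ j → δ ≤ dist (x i) (x j) := by
    intro y
    by_cases hy : y ∈ X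
    · obtain ⟨x, hx⟩ := hsep y hy
      exact ⟨x, fun _ => hx⟩
    · exact ⟨fun _ => 0, fun h => absurd h hy⟩
  choose g hg using hg'
  -- Hausdorff measure zero
  have hzero : μH[Real.log m / Real.log L] X = 0 := by
    have := hausdorffMeasure_of_dimH_lt (s := X) (d := (Real.log m / Real.log L).toNNReal) hlt
    rwa [Real.coe_toNNReal _ hd.le] at this
  set d := Real.log m / Real.log L with hdd
  rw [Measure.hausdorffMeasure_apply] at hzero
  have hr : (0 : ENNReal) < ENNReal.ofReal (δ / 2) := by simpa using hδ
  have hz2 := le_antisymm ((le_iSup₂ (f := fun (r : ENNReal) (_ : 0 < r) => 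
    ⨅ (t : ℕ → Set (EuclideanSpace ℝ (Fin n))) (_ : X ⊆ ⋃ n, t n) (_ : ∀ n, ediam (t n) ≤ r),
      ∑' n, ⨆ _ : (t n).Nonempty, ediam (t n) ^ d) _ hr).trans hzero.le) (zero_le)
  have hε : (0 : ENNReal) < ENNReal.ofReal (δ ^ d / 2) := by
    rw [ENNReal.ofReal_pos]; positivity
  rw [← hz2] at hε
  simp only [iInf_lt_iff] at hε
  obtain ⟨t, htX, htr, hts⟩ := hε
  have hDr : ∀ i, diam (t i) ≤ δ / 2 := fun i =>
    ENNReal.toReal_le_of_le_ofReal (by positivity) (htr i)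
  have htop : ∀ i, ediam (t i) ≠ ⊤ := fun i => ne_top_of_le_ne_top ENNReal.ofReal_ne_top (htr i)
  have hsum : ∀ F : Finset ℕ, ∑ i ∈ F, diam (t i) ^ d < δ ^ d / 2 := by
    intro F
    have h1 : ENNReal.ofReal (∑ i ∈ F, diam (t i) ^ d) ≤
        ∑' n, ⨆ _ : (t n).Nonempty, ediam (t n) ^ d := by
      refine le_trans ?_ (ENNReal.sum_le_tsum F)
      rw [ENNReal.ofReal_sum_of_nonneg (fun i _ => Real.rpow_nonneg diam_nonneg _)]
      apply Finset.sum_le_sum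
      intro i _
      rcases (t i).eq_empty_or_nonempty with h | h
      · simp [h, Real.zero_rpow hd.ne']
      · simp only [h, iSup_pos]
        rw [← ENNReal.ofReal_rpow_of_nonneg diam_nonneg hd.le, diam, ENNReal.ofReal_toReal (htop i)]
    exact (ENNReal.ofReal_lt_ofReal_iff (by positivity)).1 (h1.trans_lt hts)
  have hk := fun i : ℕ => exists_exponent hm hL hδ (diam_nonneg (s := t i))
    (lt_of_le_of_lt (hDr i) (by linarith)) (i + 2)
  choose k hk1 hk2 using hk
  -- thickenings
  have hη : ∀ i, ∃ η > 0, L ^ (k i - 1) * (diam (t i) + 2 * η) < δ ∨ k i = 0 := by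
    intro i
    rcases Nat.eq_zero_or_pos (k i) with h | h
    · exact ⟨1, one_pos, Or.inr h⟩
    · have h1 := hk2 i (k i - 1) (by omega)
      have hp : 0 < L ^ (k i - 1) := by positivity
      refine ⟨(δ - L ^ (k i - 1) * diam (t i)) / (4 * L ^ (k i - 1)),
        div_pos (by linarith) (by positivity), Or.inl ?_⟩
      have : L ^ (k i - 1) * (diam (t i) + 2 * ((δ - L ^ (k i - 1) * diam (t i)) / (4 * L ^ (k i - 1))))
        = L ^ (k i - 1) * diam (t i) + (δ - L ^ (k i - 1) * diam (t i)) / 2 := by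
        field_simp; ring
      linarith
  choose η hη0 hη using hη
  obtain ⟨F, hF⟩ := hXc.elim_finite_subcover (fun i => thickening (η i) (t i))
    (fun i => isOpen_thickening) (htX.trans (iUnion_mono fun i => self_subset_thickening (hη0 i) _))
  have key := one_le_sum_cover hm g f X hXne L δ (fun y hy => (hg y hy).1) (fun y hy => (hg y hy).2)
    hlipN F _ hF k (by
      intro i j hj a ha b hb
      obtain ⟨a', ha', haa⟩ := mem_thickening_iff.1 ha
      obtain ⟨b', hb', hbb⟩ := mem_thickening_iff.1 hb
      have h1 := dist_le_diam_of_mem' (htop i) ha' hb'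
      have h2 := dist_triangle4 a a' b' b
      rw [dist_comm b' b] at h2
      rcases hη i with h | h
      · calc L ^ j * dist a b ≤ L ^ (k i - 1) * (diam (t i) + 2 * η i) := by
              apply mul_le_mul (pow_le_pow_right₀ hL.le (by omega)) (by linarith) dist_nonneg
                (by positivity)
          _ < δ := h
      · omega)
  have hb : ∑ i ∈ F, ((m : ℝ)⁻¹) ^ (k i) ≤
      (∑ i ∈ F, diam (t i) ^ d) / δ ^ d + ∑ i ∈ F, (1 / 2 : ℝ) ^ (i + 2) := by
    rw [Finset.sum_div, ← Finset.sum_add_distrib]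
    apply Finset.sum_le_sum
    intro i _
    have := hk1 i
    rwa [Real.div_rpow diam_nonneg hδ.le] at this
  have hgeo : ∑ i ∈ F, (1 / 2 : ℝ) ^ (i + 2) ≤ 1 / 2 := by
    have h := Summable.sum_le_tsum (f := fun i : ℕ => (1 / 2 : ℝ) ^ i) F
      (fun _ _ => by positivity) summable_geometric_two
    rw [tsum_geometric_two] at h
    simp only [pow_add, ← Finset.sum_mul]
    linarith
  have hδd : 0 < δ ^ d := by positivity
  have : (∑ i ∈ F, diam (t i) ^ d) / δ ^ d < 1 / 2 := by
    rw [div_lt_iff₀ hδd]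
    linarith [hsum F]
  linarith
end

section
/- Let n ≥ 1, let X ⊂ ℝ^n be a nonempty compact set and let f : X → X be a continuous map. Suppose there exist an integer m ≥ 2 and δ > 0 such that f has the (m,δ)-separated preimage property on X. If f is Hölder continuous with exponent α ∈ (0,1), i.e. there is L > 0 with |f(x) − f(y)| ≤ L|x − y|^α for all x, y ∈ X, then H_h(X) > 0 for the gauge function h defined for small t > 0 by h(t) = (log(1/t))^{(log m)/(log α)} (note that (log m)/(log α) < 0, so h is increasing and h(t) → 0 as t → 0). -/
open MeasureTheory Metric Set

lemma aux_real (m : ℕ) (hm : 2 ≤ m) (α B d : ℝ) (hα0 : 0 < α) (hα1 : α < 1) (hB : 0 < B)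
    (hd : 0 < d) (hdB : B < Real.log (1 / d)) :
    ∃ k : ℕ, d < Real.exp (-(B / α ^ k)) ∧
      ((m : ℝ)⁻¹) ^ k ≤ (m * B ^ (-(Real.log m / Real.log α))) *
        Real.log (1 / d) ^ (Real.log m / Real.log α) := by
  classical
  set l := Real.log (1 / d) with hl
  set p := Real.log m / Real.log α with hp
  have hl0 : 0 < l := hB.trans hdB
  have hm1 : (1 : ℝ) < m := by exact_mod_cast hm
  have hm0 : (0 : ℝ) < m := by linarith
  have hlogα : Real.log α < 0 := Real.log_neg hα0 hα1
  have hp0 : p < 0 := div_neg_of_pos_of_neg (Real.log_pos hm1) hlogα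
  have hαp : α ^ p = m := by
    rw [Real.rpow_def_of_pos hα0, hp, mul_div_cancel₀ _ hlogα.ne, Real.exp_log hm0]
  have hex : ∃ k : ℕ, α ^ k * l ≤ B := by
    obtain ⟨k, hk⟩ := exists_pow_lt_of_lt_one (div_pos hB hl0) hα1
    exact ⟨k, by rw [lt_div_iff₀ hl0] at hk; exact hk.le⟩
  have hne : Nat.find hex ≠ 0 := by
    intro h
    have := Nat.find_spec hex
    rw [h] at this
    simp at this
    linarith
  obtain ⟨k, hk⟩ := Nat.exists_eq_succ_of_ne_zero hne
  have h1 : α ^ (k + 1) * l ≤ B := by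
    have := Nat.find_spec hex
    rwa [hk] at this
  have h2 : B < α ^ k * l := by
    have := Nat.find_min hex (m := k) (by omega)
    linarith
  refine ⟨k, ?_, ?_⟩
  · have hdl : d = Real.exp (-l) := by
      rw [hl, one_div, Real.log_inv, neg_neg, Real.exp_log hd]
    rw [hdl]
    apply Real.exp_lt_exp.2
    apply neg_lt_neg
    rw [div_lt_iff₀ (by positivity)]
    linarith
  · have hak : 0 < α ^ (k + 1) := by positivity
    have h3 : l ≤ B / α ^ (k + 1) := by
      rw [le_div_iff₀ hak]; linarith
    have h4 : (B / α ^ (k + 1)) ^ p ≤ l ^ p :=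
      Real.rpow_le_rpow_of_nonpos hl0 h3 hp0.le
    have h5 : (B / α ^ (k + 1)) ^ p = B ^ p / (m : ℝ) ^ (k + 1) := by
      rw [Real.div_rpow hB.le hak.le, ← Real.rpow_natCast_mul hα0.le, mul_comm,
        Real.rpow_mul_natCast hα0.le, hαp]
    rw [h5] at h4
    have hBp : 0 < B ^ p := Real.rpow_pos_of_pos hB p
    rw [Real.rpow_neg hB.le]
    calc ((m : ℝ)⁻¹) ^ k = (m * (B ^ p)⁻¹) * (B ^ p / (m : ℝ) ^ (k + 1)) := by
          rw [pow_succ, inv_pow]; field_simp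
      _ ≤ _ := by gcongr

section tree
variable {E : Type*} [PseudoMetricSpace E] {m : ℕ}

def treePt (g : E → Fin m → E) (y : E) : List (Fin m) → E
  | [] => y
  | i :: w => g (treePt g y w) i

lemma treePt_inj (X : Set E) (f : E → E) (g : E → Fin m → E) (y0 : E) (δ : ℝ)
    (ρ : ℕ → ℝ)
    (hX : ∀ w, treePt g y0 w ∈ X)
    (hgf : ∀ y ∈ X, ∀ i, f (g y i) = y)
    (hsep : ∀ y ∈ X, ∀ i j, i ≠ j → δ ≤ dist (g y i) (g y j))
    (hρδ : ∀ k, ρ (k + 1) ≤ δ)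
    (hρ : ∀ k, ∀ x ∈ X, ∀ y ∈ X, dist x y < ρ (k + 1) → dist (f x) (f y) < ρ k)
    (k : ℕ) : ∀ u v : List (Fin m), k ≤ u.length → k ≤ v.length → u.drop k = v.drop k →
      dist (treePt g y0 u) (treePt g y0 v) < ρ k → u = v := by
  induction k with
  | zero => intro u v _ _ h _; simpa using h
  | succ k ih =>
    intro u v hu hv h hd
    match u, v, hu, hv with
    | i :: u, j :: v, hu, hv =>
      have h1 := hρ k _ (hX (i :: u)) _ (hX (j :: v)) hd
      have e1 : f (treePt g y0 (i :: u)) = treePt g y0 u := hgf _ (hX u) i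
      have e2 : f (treePt g y0 (j :: v)) = treePt g y0 v := hgf _ (hX v) j
      rw [e1, e2] at h1
      have huv : u = v := ih u v (by simpa using hu) (by simpa using hv) (by simpa using h) h1
      subst huv
      have : i = j := by
        by_contra hij
        have := hsep _ (hX u) i j hij
        have h6 := hρδ k
        simp only [treePt] at hd
        linarith
      rw [this]

lemma tree_cover (X : Set E) (hm : 0 < m) (f : E → E) (g : E → Fin m → E) (y0 : E) (δ : ℝ)
    (ρ : ℕ → ℝ)
    (hX : ∀ w, treePt g y0 w ∈ X)
    (hgf : ∀ y ∈ X, ∀ i, f (g y i) = y)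
    (hsep : ∀ y ∈ X, ∀ i j, i ≠ j → δ ≤ dist (g y i) (g y j))
    (hρδ : ∀ k, ρ (k + 1) ≤ δ)
    (hρ : ∀ k, ∀ x ∈ X, ∀ y ∈ X, dist x y < ρ (k + 1) → dist (f x) (f y) < ρ k)
    {ι : Type*} (s : Finset ι) (U : ι → Set E) (k : ι → ℕ)
    (hU : ∀ i, ∀ x ∈ U i, ∀ y ∈ U i, dist x y < ρ (k i))
    (hc : X ⊆ ⋃ i ∈ s, U i) :
    (1 : ℝ) ≤ ∑ i ∈ s, ((m : ℝ)⁻¹) ^ (k i) := by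
  classical
  set N := s.sup k with hN
  let S : ι → Finset (List.Vector (Fin m) N) := fun i =>
    Finset.univ.filter (fun v => treePt g y0 v.1 ∈ U i)
  have hcov : (Finset.univ : Finset (List.Vector (Fin m) N)) ⊆ s.biUnion S := by
    intro v _
    have := hc (hX v.1)
    simp only [mem_iUnion] at this
    obtain ⟨i, hi, h⟩ := this
    simp only [Finset.mem_biUnion]
    exact ⟨i, hi, by simp [S, h]⟩
  have hcard : ∀ i ∈ s, (S i).card ≤ m ^ (N - k i) := by
    intro i hi
    have hk : k i ≤ N := Finset.le_sup hi
    have := Finset.card_le_card_of_injOn (s := S i)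
      (t := (Finset.univ : Finset (List.Vector (Fin m) (N - k i))))
      (fun v => v.drop (k i)) (by intro v _; simp) (by
        intro u hu v hv huv
        simp only [S, Finset.coe_filter, Finset.mem_univ, true_and, mem_setOf_eq] at hu hv
        apply Subtype.ext
        refine treePt_inj X f g y0 δ ρ hX hgf hsep hρδ hρ (k i) u.1 v.1 ?_ ?_ ?_ (hU i _ hu _ hv)
        · rw [u.2]; exact hk
        · rw [v.2]; exact hk
        · exact congrArg Subtype.val huv)
    simpa [card_vector] using this
  have h1 : m ^ N ≤ ∑ i ∈ s, m ^ (N - k i) := by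
    calc m ^ N = (Finset.univ : Finset (List.Vector (Fin m) N)).card := by
          simp [card_vector]
      _ ≤ (s.biUnion S).card := Finset.card_le_card hcov
      _ ≤ ∑ i ∈ s, (S i).card := Finset.card_biUnion_le
      _ ≤ _ := Finset.sum_le_sum hcard
  have h2 : (m : ℝ) ^ N ≤ ∑ i ∈ s, (m : ℝ) ^ (N - k i) := by exact_mod_cast h1
  have hm0 : (0 : ℝ) < m := by exact_mod_cast hm
  have h3 : ∑ i ∈ s, (m : ℝ) ^ (N - k i) = (m : ℝ) ^ N * ∑ i ∈ s, ((m : ℝ)⁻¹) ^ (k i) := by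
    rw [Finset.mul_sum]
    refine Finset.sum_congr rfl fun i hi => ?_
    rw [pow_sub₀ _ hm0.ne' (Finset.le_sup hi), inv_pow]
  rw [h3] at h2
  have : 0 < (m : ℝ) ^ N := by positivity
  exact le_of_mul_le_mul_left (by linarith) this

end tree

/-- If a continuous self-map of a nonempty compact set `X ⊆ ℝⁿ` has the
`(m,δ)`-separated preimage property and is Hölder continuous with exponent `α ∈ (0,1)`, then
the generalized Hausdorff measure of `X` with respect to the gauge function
`h(t) = (log (1/t))^{(log m)/(log α)}` is positive. -/
theorem hausdorff_gauge_measure_pos_of_separated_preimages_holder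
    (n : ℕ) (hn : 1 ≤ n)
    (X : Set (EuclideanSpace ℝ (Fin n))) (hXne : X.Nonempty) (hXc : IsCompact X)
    (f : EuclideanSpace ℝ (Fin n) → EuclideanSpace ℝ (Fin n))
    (hfc : ContinuousOn f X) (hfX : Set.MapsTo f X X)
    (m : ℕ) (hm : 2 ≤ m) (δ : ℝ) (hδ : 0 < δ)
    (hsep : ∀ y ∈ X, ∃ x : Fin m → EuclideanSpace ℝ (Fin n),
      (∀ i, x i ∈ X ∧ f (x i) = y) ∧ ∀ i j, i ≠ j → δ ≤ dist (x i) (x j))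
    (α L : ℝ) (hα0 : 0 < α) (hα1 : α < 1) (hL : 0 < L)
    (hholder : ∀ x ∈ X, ∀ y ∈ X, dist (f x) (f y) ≤ L * dist x y ^ α) :
    0 < MeasureTheory.Measure.mkMetric
      (fun d => ENNReal.ofReal (Real.log (1 / d.toReal) ^ (Real.log m / Real.log α))) X := by
  classical
  have hm1 : (1 : ℝ) < m := by exact_mod_cast hm
  have hm0 : (0 : ℝ) < m := by linarith
  -- constants
  obtain ⟨K, hK1, hK⟩ : ∃ K : ℝ, 1 ≤ K ∧ L * K ^ α ≤ K := by
    have h1α : 0 < 1 - α := by linarith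
    have hM : (1 : ℝ) ≤ max 1 L := le_max_left _ _
    have hK1 : 1 ≤ (max 1 L) ^ (1 / (1 - α)) := Real.one_le_rpow hM (by positivity)
    refine ⟨(max 1 L) ^ (1 / (1 - α)), hK1, ?_⟩
    set K := (max 1 L) ^ (1 / (1 - α)) with hKdef
    have hK0 : 0 < K := by linarith
    have e : K ^ (1 - α) = max 1 L := by
      rw [hKdef, ← Real.rpow_mul (by linarith), one_div, inv_mul_cancel₀ h1α.ne', Real.rpow_one]
    calc L * K ^ α ≤ K ^ (1 - α) * K ^ α := by
          rw [e]; gcongr; exact le_max_right _ _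
      _ = K := by rw [← Real.rpow_add hK0]; simp
  have hK0 : 0 < K := by linarith
  obtain ⟨B, hB, hBδ⟩ : ∃ B : ℝ, 0 < B ∧ K * Real.exp (-B) ≤ δ := by
    refine ⟨max 1 (Real.log (K / δ)), by positivity, ?_⟩
    have : Real.exp (-(max 1 (Real.log (K / δ)))) ≤ Real.exp (-(Real.log (K / δ))) :=
      Real.exp_le_exp.2 (neg_le_neg (le_max_right _ _))
    rw [Real.exp_neg (Real.log (K / δ)), Real.exp_log (by positivity)] at this
    calc _ ≤ K * (K / δ)⁻¹ := by gcongr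
      _ = δ := by field_simp
  let ρ : ℕ → ℝ := fun k => K * Real.exp (-(B / α ^ k))
  have hρpos : ∀ k, 0 < ρ k := fun k => by positivity
  have hρδ : ∀ k, ρ (k + 1) ≤ δ := by
    intro k
    refine le_trans ?_ hBδ
    simp only [ρ]
    gcongr
    rw [le_div_iff₀ (by positivity)]
    have : α ^ (k + 1) ≤ 1 := pow_le_one₀ hα0.le hα1.le
    nlinarith
  have hρ : ∀ k, ∀ x ∈ X, ∀ y ∈ X, dist x y < ρ (k + 1) → dist (f x) (f y) < ρ k := by
    intro k x hx y hy hd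
    have e : ρ (k + 1) ^ α = K ^ α * Real.exp (-(B / α ^ k)) := by
      simp only [ρ]
      rw [Real.mul_rpow hK0.le (Real.exp_pos _).le, ← Real.exp_mul]
      congr 2
      rw [pow_succ]; field_simp
    calc dist (f x) (f y) ≤ L * dist x y ^ α := hholder x hx y hy
      _ < L * ρ (k + 1) ^ α := by
          gcongr
      _ = (L * K ^ α) * Real.exp (-(B / α ^ k)) := by rw [e]; ring
      _ ≤ ρ k := by simp only [ρ]; gcongr
  -- tree
  obtain ⟨y0, hy0⟩ := hXne
  have hsep' : ∀ y, ∃ x : Fin m → EuclideanSpace ℝ (Fin n), y ∈ X →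
      (∀ i, x i ∈ X ∧ f (x i) = y) ∧ ∀ i j, i ≠ j → δ ≤ dist (x i) (x j) := by
    intro y
    by_cases hy : y ∈ X
    · obtain ⟨x, hx⟩ := hsep y hy
      exact ⟨x, fun _ => hx⟩
    · exact ⟨fun _ => y, fun h => absurd h hy⟩
  choose g hg using hsep'
  have hX : ∀ w, treePt g y0 w ∈ X := by
    intro w
    induction w with
    | nil => exact hy0
    | cons i w ih => exact ((hg _ ih).1 i).1
  set p := Real.log m / Real.log α with hp
  set C : ℝ := m * B ^ (-p) with hC
  have hC0 : 0 < C := by positivity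
  set h : ENNReal → ENNReal := fun d => ENNReal.ofReal (Real.log (1 / d.toReal) ^ p) with hh
  rw [Measure.mkMetric_apply]
  have hr : (0 : ENNReal) < ENNReal.ofReal (Real.exp (-(2 * B))) :=
    ENNReal.ofReal_pos.2 (Real.exp_pos _)
  refine lt_of_lt_of_le ?_ (le_iSup₂_of_le _ hr le_rfl)
  have hpos : (0 : ENNReal) < 2⁻¹ / ENNReal.ofReal C :=
    ENNReal.div_pos (by simp) ENNReal.ofReal_ne_top
  refine lt_of_lt_of_le hpos ?_
  refine le_iInf fun t => le_iInf fun htX => le_iInf fun htd => ?_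
  obtain ⟨ε, hε0, hεs⟩ := ENNReal.exists_pos_sum_of_countable (ε := 2⁻¹) (by simp) ℕ
  have key : ∀ j, ∃ (k : ℕ) (U : Set (EuclideanSpace ℝ (Fin n))), IsOpen U ∧ t j ⊆ U ∧
      (∀ x ∈ U, ∀ y ∈ U, dist x y < ρ k) ∧
      ENNReal.ofReal (((m : ℝ)⁻¹) ^ k) ≤
        ENNReal.ofReal C * (⨆ _ : (t j).Nonempty, h (ediam (t j))) + ε j := by
    intro j
    have hfin : ediam (t j) ≠ ⊤ := ne_top_of_le_ne_top ENNReal.ofReal_ne_top (htd j)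
    have hdle : (ediam (t j)).toReal ≤ Real.exp (-(2 * B)) :=
      ENNReal.toReal_le_of_le_ofReal (Real.exp_pos _).le (htd j)
    obtain ⟨k, hk, hkm⟩ : ∃ k : ℕ, (ediam (t j)).toReal < ρ k ∧
        ENNReal.ofReal (((m : ℝ)⁻¹) ^ k) ≤
        ENNReal.ofReal C * (⨆ _ : (t j).Nonempty, h (ediam (t j))) + ε j := by
      rcases (ENNReal.toReal_nonneg (a := ediam (t j))).eq_or_lt with h0 | h0
      · obtain ⟨k, hk⟩ := exists_pow_lt_of_lt_one (show (0 : ℝ) < ε j from hε0 j)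
          (inv_lt_one_of_one_lt₀ hm1)
        refine ⟨k, by rw [← h0]; exact hρpos k, le_add_left ?_⟩
        rw [← ENNReal.ofReal_coe_nnreal]
        exact ENNReal.ofReal_le_ofReal hk.le
      · have hne : (t j).Nonempty := by
          rw [nonempty_iff_ne_empty]
          intro he
          rw [he] at h0
          simp at h0
        have hlog : B < Real.log (1 / (ediam (t j)).toReal) := by
          rw [one_div, Real.log_inv]
          have := Real.log_le_log h0 hdle
          rw [Real.log_exp] at this
          linarith
        obtain ⟨k, hk1, hk2⟩ := aux_real m hm α B _ hα0 hα1 hB h0 hlog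
        refine ⟨k, hk1.trans_le ?_, le_add_right ?_⟩
        · simp only [ρ]
          exact le_mul_of_one_le_left (Real.exp_pos _).le hK1
        · rw [iSup_pos hne, hh, ← ENNReal.ofReal_mul hC0.le]
          exact ENNReal.ofReal_le_ofReal hk2
    set d := (ediam (t j)).toReal with hd
    refine ⟨k, thickening ((ρ k - d) / 3) (t j), isOpen_thickening,
      self_subset_thickening (by linarith) _, ?_, hkm⟩
    intro x hx y hy
    rw [mem_thickening_iff] at hx hy
    obtain ⟨a, ha, hxa⟩ := hx
    obtain ⟨b, hb, hyb⟩ := hy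
    have hab : dist a b ≤ d := by
      rw [dist_edist]
      exact ENNReal.toReal_mono hfin (edist_le_ediam_of_mem ha hb)
    have := dist_triangle4 x a b y
    rw [dist_comm b y] at this
    linarith
  choose k U hUo htU hUd hUm using key
  obtain ⟨s, hs⟩ := hXc.elim_finite_subcover U hUo
    (htX.trans (iUnion_mono htU))
  have h1 := tree_cover X (by omega) f g y0 δ ρ hX (fun y hy i => ((hg y hy).1 i).2)
    (fun y hy => (hg y hy).2) hρδ hρ s U k hUd hs
  set S := ∑' j, ⨆ _ : (t j).Nonempty, h (ediam (t j)) with hS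
  have h2 : (1 : ENNReal) ≤ ENNReal.ofReal C * S + 2⁻¹ := by
    calc (1 : ENNReal) = ENNReal.ofReal 1 := by simp
      _ ≤ ENNReal.ofReal (∑ i ∈ s, ((m : ℝ)⁻¹) ^ (k i)) := ENNReal.ofReal_le_ofReal h1
      _ = ∑ i ∈ s, ENNReal.ofReal (((m : ℝ)⁻¹) ^ (k i)) :=
          ENNReal.ofReal_sum_of_nonneg fun i _ => by positivity
      _ ≤ ∑ j ∈ s, (ENNReal.ofReal C * (⨆ _ : (t j).Nonempty, h (ediam (t j))) + ε j) :=
          Finset.sum_le_sum fun j _ => hUm j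
      _ ≤ ∑' j, (ENNReal.ofReal C * (⨆ _ : (t j).Nonempty, h (ediam (t j))) + ε j) :=
          ENNReal.sum_le_tsum _
      _ = ENNReal.ofReal C * S + ∑' j, (ε j : ENNReal) := by
          rw [ENNReal.tsum_add, ENNReal.tsum_mul_left]
      _ ≤ _ := by gcongr
  have h3 : (2⁻¹ : ENNReal) ≤ ENNReal.ofReal C * S := by
    rw [← ENNReal.inv_two_add_inv_two] at h2
    exact (ENNReal.add_le_add_iff_right (by simp)).1 h2
  exact ENNReal.div_le_of_le_mul' h3
end

section
/- Let n ≥ 1, let X ⊂ ℝ^n be a nonempty compact set and let f : X → X be a continuous map with modulus of continuity ω. Suppose there exist an integer m ≥ 2 and δ > 0 such that f has the (m,δ)-separated preimage property on X. Let h : (0,η] → (0,∞) be a gauge function and suppose that for all sufficiently large k ∈ ℕ there exists t_k ∈ (0,η] with h(t_k) = 1/m^k and ω^k(t_k) ≤ δ/2. Then there exist a Borel probability measure μ on ℝ^n supported on X and a constant η' > 0 such that μ(B(x,r)) ≤ h(r) for every x ∈ X and every r with 0 < r ≤ η', where B(x,r) denotes the open Euclidean ball of radius r centered at x. -/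
open MeasureTheory Metric Set Filter

/-- Averages of point masses over the chosen preimage tree. -/
noncomputable def treeMeas {Y : Type*} [MeasurableSpace Y] {m : ℕ} (g : Fin m → Y → Y) :
    ℕ → Y → Measure Y
  | 0, y => Measure.dirac y
  | k + 1, y => (m : ENNReal)⁻¹ • ∑ i, treeMeas g k (g i y)

lemma treeMeas_prob {Y : Type*} [MeasurableSpace Y] {m : ℕ} (hm : 2 ≤ m) (g : Fin m → Y → Y)
    (k : ℕ) (y : Y) : IsProbabilityMeasure (treeMeas g k y) := by
  induction k generalizing y with
  | zero => rw [treeMeas]; infer_instance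
  | succ k ih =>
    constructor
    have h1 : ∀ i, treeMeas g k (g i y) univ = 1 := fun i => (ih (g i y)).measure_univ
    have hm0 : (m : ENNReal) ≠ 0 := by
      simp only [ne_eq, Nat.cast_eq_zero]; omega
    simp only [treeMeas, Measure.smul_apply, Measure.finsetSum_apply, h1, smul_eq_mul]
    simp only [Finset.sum_const, Finset.card_univ, Fintype.card_fin, nsmul_eq_mul, mul_one]
    exact ENNReal.inv_mul_cancel hm0 (by simp)

lemma treeMeas_supp {Y : Type*} [MeasurableSpace Y] {m : ℕ} (f : Y → Y) (g : Fin m → Y → Y)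
    (hg : ∀ i y, f (g i y) = y) (B : Set Y) (hB : MeasurableSet B)
    (k : ℕ) (y : Y) (hne : treeMeas g k y B ≠ 0) : ∃ w ∈ B, f^[k] w = y := by
  induction k generalizing y with
  | zero =>
    rw [treeMeas, Measure.dirac_apply' _ hB] at hne
    refine ⟨y, ?_, rfl⟩
    by_contra hy
    exact hne (by simp [hy])
  | succ k ih =>
    simp only [treeMeas, Measure.smul_apply, Measure.finsetSum_apply, smul_eq_mul] at hne
    have h2 := right_ne_zero_of_mul hne
    obtain ⟨i, -, hi⟩ := Finset.exists_ne_zero_of_sum_ne_zero h2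
    obtain ⟨w, hw, hwe⟩ := ih _ hi
    exact ⟨w, hw, by rw [Function.iterate_succ_apply', hwe, hg]⟩

lemma treeMeas_ball {Y : Type*} [MetricSpace Y] [MeasurableSpace Y] [BorelSpace Y]
    {m : ℕ} (hm : 2 ≤ m) (f : Y → Y) (g : Fin m → Y → Y)
    (hg : ∀ i y, f (g i y) = y) (δ : ℝ) (hgd : ∀ i j y, i ≠ j → δ ≤ dist (g i y) (g j y))
    (t : ℝ) (K : ℕ) (hK : ∀ x y, dist x y < t → ∀ j < K, dist (f^[j] x) (f^[j] y) < δ / 2)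
    (x : Y) (k : ℕ) (y : Y) :
    treeMeas g k y (ball x t) ≤ ((m : ENNReal)⁻¹) ^ (min k K) := by
  have hm0 : (m : ENNReal) ≠ 0 := by
    simp only [ne_eq, Nat.cast_eq_zero]; omega
  induction k generalizing y with
  | zero =>
    have := treeMeas_prob hm g 0 y
    simpa using (prob_le_one : treeMeas g 0 y (ball x t) ≤ 1)
  | succ k ih =>
    simp only [treeMeas, Measure.smul_apply, Measure.finsetSum_apply, smul_eq_mul]
    rcases lt_or_ge k K with hkK | hkK
    · have e1 : min (k + 1) K = k + 1 := by omega
      have e2 : min k K = k := by omega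
      rw [e1, pow_succ']
      rw [e2] at ih
      gcongr
      by_cases hex : ∃ i, treeMeas g k (g i y) (ball x t) ≠ 0
      · obtain ⟨i, hi⟩ := hex
        rw [Finset.sum_eq_single i]
        · exact ih _
        · intro j _ hji
          by_contra hj
          obtain ⟨w, hw, hwe⟩ := treeMeas_supp f g hg _ measurableSet_ball k _ hi
          obtain ⟨v, hv, hve⟩ := treeMeas_supp f g hg _ measurableSet_ball k _ hj
          have a1 := hK _ _ (mem_ball.1 hw) k hkK
          have a2 := hK _ _ (mem_ball.1 hv) k hkK
          rw [hwe] at a1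
          rw [hve] at a2
          have a3 := hgd j i y hji
          have a4 := dist_triangle_right (g j y) (g i y) (f^[k] x)
          linarith
        · simp
      · push Not at hex
        simp [hex]
    · have e1 : min (k + 1) K = K := by omega
      have e2 : min k K = K := by omega
      rw [e1]
      rw [e2] at ih
      calc (m : ENNReal)⁻¹ * ∑ i, treeMeas g k (g i y) (ball x t)
          ≤ (m : ENNReal)⁻¹ * ∑ i : Fin m, ((m : ENNReal)⁻¹) ^ K := by
            gcongr with i
            exact ih _
        _ = ((m : ENNReal)⁻¹) ^ K := by
            simp only [Finset.sum_const, Finset.card_univ, Fintype.card_fin, nsmul_eq_mul]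
            rw [← mul_assoc, ENNReal.inv_mul_cancel hm0 (by simp), one_mul]

lemma exists_limit_meas {Y : Type*} [MetricSpace Y] [CompactSpace Y] [Nonempty Y]
    [MeasurableSpace Y] [BorelSpace Y]
    {m : ℕ} (hm : 2 ≤ m) (f : Y → Y) (δ : ℝ)
    (hsep : ∀ y, ∃ x : Fin m → Y, (∀ i, f (x i) = y) ∧ ∀ i j, i ≠ j → δ ≤ dist (x i) (x j)) :
    ∃ μ : Measure Y, IsProbabilityMeasure μ ∧ ∀ (t : ℝ) (K : ℕ),
      (∀ x y, dist x y < t → ∀ j < K, dist (f^[j] x) (f^[j] y) < δ / 2) →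
      ∀ x, μ (ball x t) ≤ ((m : ENNReal)⁻¹) ^ K := by
  choose g' hg hgd using hsep
  let g : Fin m → Y → Y := fun i y => g' y i
  let y0 : Y := Classical.arbitrary Y
  let μs : ℕ → ProbabilityMeasure Y := fun k => ⟨treeMeas g k y0, treeMeas_prob hm g k y0⟩
  let U : Ultrafilter ℕ := hyperfilter ℕ
  have hU : (U : Filter ℕ) ≤ atTop := by
    rw [← Nat.cofinite_eq_atTop]; exact hyperfilter_le_cofinite
  obtain ⟨μ, -, hμ⟩ := isCompact_iff_ultrafilter_le_nhds.1
    (isCompact_univ : IsCompact (univ : Set (ProbabilityMeasure Y))) (U.map μs) (by simp)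
  have hlim : Tendsto μs (U : Filter ℕ) (nhds μ) := hμ
  refine ⟨μ, inferInstance, fun t K hK x => ?_⟩
  refine (ProbabilityMeasure.le_liminf_measure_open_of_tendsto hlim isOpen_ball).trans ?_
  refine liminf_le_of_frequently_le' (Eventually.frequently ?_)
  refine hU ?_
  filter_upwards [eventually_ge_atTop K] with k hk
  have := treeMeas_ball hm f g (fun i y => hg y i) δ (fun i j y hij => hgd y i j hij) t K hK x k y0
  rwa [min_eq_right hk] at this

set_option maxHeartbeats 200000 in
/-- Under the hypotheses of Statement 0, there is a Borel probability
measure `μ` supported on `X` and `η' > 0` with `μ(B(x,r)) ≤ h(r)` for all `x ∈ X` and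
`0 < r ≤ η'`. -/
theorem exists_measure_ball_le_gauge_of_separated_preimages
    (n : ℕ) (hn : 1 ≤ n)
    (X : Set (EuclideanSpace ℝ (Fin n))) (hXne : X.Nonempty) (hXc : IsCompact X)
    (f : EuclideanSpace ℝ (Fin n) → EuclideanSpace ℝ (Fin n))
    (hfc : ContinuousOn f X) (hfX : Set.MapsTo f X X)
    (ω : ℝ → ℝ) (hωmono : StrictMonoOn ω (Set.Ici 0))
    (hωcont : ContinuousOn ω (Set.Ici 0))
    (hω0 : ω 0 = 0) (hωnonneg : ∀ t, 0 ≤ t → 0 ≤ ω t)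
    (hωmod : ∀ x ∈ X, ∀ y ∈ X, dist (f x) (f y) ≤ ω (dist x y))
    (m : ℕ) (hm : 2 ≤ m) (δ : ℝ) (hδ : 0 < δ)
    (hsep : ∀ y ∈ X, ∃ x : Fin m → EuclideanSpace ℝ (Fin n),
      (∀ i, x i ∈ X ∧ f (x i) = y) ∧ ∀ i j, i ≠ j → δ ≤ dist (x i) (x j))
    (η : ℝ) (hη : 0 < η) (h : ℝ → ℝ)
    (hmono : StrictMonoOn h (Set.Ioc 0 η)) (hcont : ContinuousOn h (Set.Ioc 0 η))
    (hpos : ∀ t ∈ Set.Ioc 0 η, 0 < h t)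
    (hlim : Filter.Tendsto h (nhdsWithin 0 (Set.Ioi 0)) (nhds 0))
    (hk : ∀ᶠ k : ℕ in Filter.atTop, ∃ t ∈ Set.Ioc (0:ℝ) η,
      h t = 1 / (m : ℝ) ^ k ∧ ω^[k] t ≤ δ / 2) :
    ∃ μ : MeasureTheory.Measure (EuclideanSpace ℝ (Fin n)),
      MeasureTheory.IsProbabilityMeasure μ ∧ μ Xᶜ = 0 ∧
      ∃ η' : ℝ, 0 < η' ∧ ∀ x ∈ X, ∀ r : ℝ, 0 < r → r ≤ η' →
        μ (Metric.ball x r) ≤ ENNReal.ofReal (h r) := by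
  classical
  have : CompactSpace X := isCompact_iff_compactSpace.1 hXc
  have : Nonempty X := hXne.to_subtype
  let F : X → X := hfX.restrict f X X
  obtain ⟨μ, hμ, hball⟩ := exists_limit_meas (Y := X) hm F δ (by
    intro y
    obtain ⟨x, hx, hd⟩ := hsep y y.2
    exact ⟨fun i => ⟨x i, (hx i).1⟩, fun i => Subtype.ext (hx i).2, fun i j hij => hd i j hij⟩)
  refine ⟨μ.map Subtype.val, Measure.isProbabilityMeasure_map measurable_subtype_coe.aemeasurable,
    ?_, ?_⟩
  · rw [Measure.map_apply measurable_subtype_coe hXc.measurableSet.compl]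
    convert measure_empty (μ := μ)
    ext y; simp
  have hm1 : (1 : ℝ) < m := by exact_mod_cast (by omega : 1 < m)
  have hm0 : (0 : ℝ) < m := by linarith
  have hpow : Tendsto (fun k : ℕ => 1 / (m : ℝ) ^ k) atTop (nhds 0) := by
    have := tendsto_pow_atTop_nhds_zero_of_lt_one (r := (m : ℝ)⁻¹) (by positivity)
      (inv_lt_one_of_one_lt₀ hm1)
    simpa [one_div, inv_pow] using this
  have hs : min (δ / 2) η ∈ Ioc 0 η := ⟨lt_min (by positivity) hη, min_le_right _ _⟩
  have hsmall := hpow.eventually_lt_const (hpos _ hs)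
  obtain ⟨K0, hK0⟩ := eventually_atTop.1 (hk.and hsmall)
  obtain ⟨t0, ht0, hht0, -⟩ := (hK0 K0 le_rfl).1
  have hit : ∀ t, 0 ≤ t → ∀ j, 0 ≤ ω^[j] t := by
    intro t ht j
    induction j with
    | zero => exact ht
    | succ j ih => rw [Function.iterate_succ_apply']; exact hωnonneg _ ih
  refine ⟨t0, ht0.1, fun x hx r hr hrt => ?_⟩
  have hrη : r ∈ Ioc 0 η := ⟨hr, hrt.trans ht0.2⟩
  have hex : ∃ k : ℕ, 1 / (m : ℝ) ^ k < h r := (hpow.eventually_lt_const (hpos r hrη)).exists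
  obtain ⟨k, hkK, hk1, hk2⟩ : ∃ k, K0 ≤ k ∧ h r ≤ 1 / (m : ℝ) ^ k ∧ 1 / (m : ℝ) ^ (k + 1) < h r := by
    have h1 := Nat.find_spec hex
    have h2 : K0 < Nat.find hex := by
      by_contra hc
      push Not at hc
      have a1 : h r ≤ h t0 := hmono.monotoneOn hrη ht0 hrt
      have a2 : 1 / (m : ℝ) ^ K0 ≤ 1 / (m : ℝ) ^ (Nat.find hex) := by
        apply one_div_le_one_div_of_le (by positivity)
        exact pow_le_pow_right₀ hm1.le hc
      linarith
    obtain ⟨k, hke⟩ : ∃ k, Nat.find hex = k + 1 := ⟨Nat.find hex - 1, by omega⟩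
    refine ⟨k, by omega, ?_, by rw [← hke]; exact h1⟩
    have := Nat.find_min hex (m := k) (by omega)
    exact not_lt.1 this
  obtain ⟨⟨t, ht, hht, hωt⟩, hlt⟩ := hK0 k hkK
  have hrt' : r ≤ t := (hmono.le_iff_le hrη ht).1 (by rw [hht]; exact hk1)
  have htδ : t ≤ δ / 2 := by
    have : t < min (δ / 2) η := (hmono.lt_iff_lt ht hs).1 (by rw [hht]; exact hlt)
    exact this.le.trans (min_le_left _ _)
  have hωj : ∀ j < k + 1, ω^[j] t ≤ δ / 2 := by
    intro j hj
    have hm' := hωmono.monotoneOn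
    rcases le_total t (ω t) with hle | hle
    · have hstep : ∀ i, ω^[i] t ≤ ω^[i + 1] t := by
        intro i
        induction i with
        | zero => simpa using hle
        | succ i ih =>
          rw [Function.iterate_succ_apply' ω i, Function.iterate_succ_apply' ω (i + 1)]
          exact hm' (hit t ht.1.le i) (hit t ht.1.le (i + 1)) ih
      exact (monotone_nat_of_le_succ (f := fun i => ω^[i] t) hstep (by omega : j ≤ k)).trans hωt
    · have hstep : ∀ i, ω^[i + 1] t ≤ ω^[i] t := by
        intro i
        induction i with
        | zero => simpa using hle
        | succ i ih =>
          rw [Function.iterate_succ_apply' ω i, Function.iterate_succ_apply' ω (i + 1)]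
          exact hm' (hit t ht.1.le (i + 1)) (hit t ht.1.le i) ih
      exact (antitone_nat_of_succ_le (f := fun i => ω^[i] t) hstep (Nat.zero_le j)).trans htδ
  have hb := hball t (k + 1) (by
    intro a b hab j hj
    refine lt_of_lt_of_le ?_ (hωj j hj)
    clear hj
    induction j with
    | zero => simpa using hab
    | succ j ih =>
      rw [Function.iterate_succ_apply', Function.iterate_succ_apply', Function.iterate_succ_apply']
      refine lt_of_le_of_lt (hωmod _ (F^[j] a).2 _ (F^[j] b).2) ?_
      exact hωmono dist_nonneg (hit t ht.1.le j) ih) ⟨x, hx⟩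
  have e1 : (Measure.map Subtype.val μ) (ball x r) = μ (Subtype.val ⁻¹' ball x r) :=
    Measure.map_apply measurable_subtype_coe measurableSet_ball
  have e2 : μ (Subtype.val ⁻¹' ball x r) ≤ μ (ball ⟨x, hx⟩ t) := by
    apply measure_mono
    intro y hy
    have hy' : dist (y : EuclideanSpace ℝ (Fin n)) x < r := hy
    rw [mem_ball, Subtype.dist_eq]
    exact lt_of_lt_of_le hy' hrt'
  have e3 : ((m : ENNReal)⁻¹) ^ (k + 1) = ENNReal.ofReal (1 / (m : ℝ) ^ (k + 1)) := by
    rw [one_div, ← inv_pow, ENNReal.ofReal_pow (by positivity), ENNReal.ofReal_inv_of_pos hm0,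
      ENNReal.ofReal_natCast]
  have e4 : ENNReal.ofReal (1 / (m : ℝ) ^ (k + 1)) ≤ ENNReal.ofReal (h r) :=
    ENNReal.ofReal_le_ofReal hk2.le
  rw [e1]
  exact e2.trans (hb.trans (e3.le.trans e4))
end

section
/- Let n ≥ 1, let X ⊂ ℝ^n be a nonempty compact set and let f : X → X be a map with modulus of continuity ω. Suppose there exist an integer m ≥ 2 and δ > 0 such that f has the (m,δ)-separated preimage property on X. Then for every y ∈ X there exists a sequence (E_k)_{k≥0} of finite subsets of X with the following properties: E_0 = {y}; card E_k = m^k for all k; for every k ≥ 1, every point of E_{k−1} has exactly m preimages under f lying in E_k, and any two distinct points x, x' ∈ E_k with f(x) = f(x') satisfy |x − x'| ≥ δ. Moreover, defining the probability measures μ_k := m^{−k} Σ_{x ∈ E_k} δ_x (where δ_x is the Dirac measure at x), one has μ_{k+1}(B(x,r)) ≤ (1/m) · μ_k(B(f(x), ω(r))) for every k ≥ 0, every x ∈ X and every r with 0 < r ≤ δ/2, where B(z,s) denotes the open Euclidean ball of radius s centered at z. -/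
open MeasureTheory Metric Set

/-- Construction of the sets `E_k` and the measures
`μ_k = m^{-k} ∑_{x ∈ E_k} δ_x` used in the mass distribution argument. -/
theorem exists_preimage_tree_and_measures
    (n : ℕ) (hn : 1 ≤ n)
    (X : Set (EuclideanSpace ℝ (Fin n))) (hXne : X.Nonempty) (hXc : IsCompact X)
    (f : EuclideanSpace ℝ (Fin n) → EuclideanSpace ℝ (Fin n))
    (hfX : Set.MapsTo f X X)
    (ω : ℝ → ℝ) (hωmono : StrictMonoOn ω (Set.Ici 0))
    (hωcont : ContinuousOn ω (Set.Ici 0))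
    (hω0 : ω 0 = 0) (hωnonneg : ∀ t, 0 ≤ t → 0 ≤ ω t)
    (hωmod : ∀ x ∈ X, ∀ y ∈ X, dist (f x) (f y) ≤ ω (dist x y))
    (m : ℕ) (hm : 2 ≤ m) (δ : ℝ) (hδ : 0 < δ)
    (hsep : ∀ y ∈ X, ∃ x : Fin m → EuclideanSpace ℝ (Fin n),
      (∀ i, x i ∈ X ∧ f (x i) = y) ∧ ∀ i j, i ≠ j → δ ≤ dist (x i) (x j))
    (y : EuclideanSpace ℝ (Fin n)) (hy : y ∈ X) :
    ∃ E : ℕ → Finset (EuclideanSpace ℝ (Fin n)),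
      E 0 = {y} ∧
      (∀ k, (E k : Set (EuclideanSpace ℝ (Fin n))) ⊆ X) ∧
      (∀ k, (E k).card = m ^ k) ∧
      (∀ k, ∀ z ∈ E k, {x ∈ (E (k + 1) : Set (EuclideanSpace ℝ (Fin n))) | f x = z}.ncard = m) ∧
      (∀ k, ∀ x ∈ E (k + 1), ∀ x' ∈ E (k + 1), x ≠ x' → f x = f x' → δ ≤ dist x x') ∧
      (∀ k, ∀ x ∈ X, ∀ r : ℝ, 0 < r → r ≤ δ / 2 →
        (((m : ENNReal) ^ (k + 1))⁻¹ • ∑ z ∈ E (k + 1), MeasureTheory.Measure.dirac z)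
            (Metric.ball x r)
          ≤ (m : ENNReal)⁻¹ *
            (((m : ENNReal) ^ k)⁻¹ • ∑ z ∈ E k, MeasureTheory.Measure.dirac z)
              (Metric.ball (f x) (ω r))) := by
  classical
  have key : ∀ z, ∃ s : Finset (EuclideanSpace ℝ (Fin n)), z ∈ X →
      (∀ x ∈ s, x ∈ X ∧ f x = z) ∧ s.card = m ∧
      (∀ x ∈ s, ∀ x' ∈ s, x ≠ x' → δ ≤ dist x x') := by
    intro z
    by_cases hz : z ∈ X
    · obtain ⟨u, hu, hd⟩ := hsep z hz
      have hinj : Function.Injective u := by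
        intro i j hij
        by_contra hne
        have := hd i j hne
        rw [hij, dist_self] at this
        linarith
      refine ⟨Finset.univ.image u, fun _ => ⟨?_, ?_, ?_⟩⟩
      · intro x hx
        obtain ⟨i, -, rfl⟩ := Finset.mem_image.1 hx
        exact hu i
      · rw [Finset.card_image_of_injective _ hinj]
        simp
      · intro x hx x' hx' hne
        obtain ⟨i, -, rfl⟩ := Finset.mem_image.1 hx
        obtain ⟨j, -, rfl⟩ := Finset.mem_image.1 hx'
        exact hd i j (fun h => hne (by rw [h]))
    · exact ⟨∅, fun h => absurd h hz⟩
  choose g hg using key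
  obtain ⟨E, E0, ES⟩ : ∃ E : ℕ → Finset (EuclideanSpace ℝ (Fin n)),
      E 0 = {y} ∧ ∀ k, E (k + 1) = (E k).biUnion g :=
    ⟨fun k => Nat.rec {y} (fun _ s => s.biUnion g) k, rfl, fun _ => rfl⟩
  have EX : ∀ k, ∀ x ∈ E k, x ∈ X := by
    intro k
    induction k with
    | zero =>
      intro x hx
      rw [E0, Finset.mem_singleton] at hx
      exact hx ▸ hy
    | succ k ih =>
      intro x hx
      rw [ES, Finset.mem_biUnion] at hx
      obtain ⟨w, hw, hx⟩ := hx
      exact ((hg w (ih w hw)).1 x hx).1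
  have Edisj : ∀ k, (E k : Set (EuclideanSpace ℝ (Fin n))).PairwiseDisjoint g := by
    intro k a ha b hb hab
    refine Finset.disjoint_left.2 fun x hxa hxb => hab ?_
    rw [← ((hg a (EX k a ha)).1 x hxa).2, ← ((hg b (EX k b hb)).1 x hxb).2]
  have Emem : ∀ k, ∀ x ∈ E (k + 1), x ∈ g (f x) ∧ f x ∈ E k := by
    intro k x hx
    rw [ES, Finset.mem_biUnion] at hx
    obtain ⟨w, hw, hx⟩ := hx
    rw [((hg w (EX k w hw)).1 x hx).2]
    exact ⟨hx, hw⟩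
  refine ⟨E, E0, fun k x hx => EX k x hx, ?_, ?_, ?_, ?_⟩
  · intro k
    induction k with
    | zero => simp [E0]
    | succ k ih =>
      rw [ES, Finset.card_biUnion (Edisj k),
        Finset.sum_congr rfl (fun w hw => (hg w (EX k w hw)).2.1)]
      simp [ih, pow_succ]
  · intro k z hz
    have : {x ∈ (E (k + 1) : Set (EuclideanSpace ℝ (Fin n))) | f x = z} = (g z : Set _) := by
      ext x
      constructor
      · rintro ⟨hx, rfl⟩
        exact (Emem k x hx).1
      · intro hx
        refine ⟨?_, ((hg z (EX k z hz)).1 x hx).2⟩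
        rw [ES]
        exact Finset.mem_coe.2 (Finset.mem_biUnion.2 ⟨z, hz, hx⟩)
    rw [this, Set.ncard_coe_finset]
    exact (hg z (EX k z hz)).2.1
  · intro k x hx x' hx' hne hff
    have h1 := Emem k x hx
    have h2 := Emem k x' hx'
    rw [← hff] at h2
    exact (hg _ (EX k _ h1.2)).2.2 x h1.1 x' h2.1 hne
  · intro k x hx r hr hrδ
    have hm0 : (m : ENNReal) ≠ 0 := by
      simp only [ne_eq, Nat.cast_eq_zero]; omega
    have main : ∑ z ∈ E (k + 1), Measure.dirac z (ball x r)
        ≤ ∑ w ∈ E k, Measure.dirac w (ball (f x) (ω r)) := by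
      rw [ES, Finset.sum_biUnion (Edisj k)]
      refine Finset.sum_le_sum fun w hw => ?_
      obtain ⟨h1, -, h3⟩ := hg w (EX k w hw)
      by_cases hex : ∃ z ∈ g w, z ∈ ball x r
      · obtain ⟨z, hz, hzb⟩ := hex
        rw [Finset.sum_eq_single_of_mem z hz]
        · have hwb : w ∈ ball (f x) (ω r) := by
            rw [← (h1 z hz).2, mem_ball]
            exact (hωmod z (h1 z hz).1 x hx).trans_lt
              (hωmono (Set.mem_Ici.2 dist_nonneg) (Set.mem_Ici.2 hr.le) (mem_ball.1 hzb))
          rw [Measure.dirac_apply_of_mem hwb, Measure.dirac_apply_of_mem hzb]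
        · intro b hb hbz
          rw [Measure.dirac_apply' _ measurableSet_ball, Set.indicator_of_notMem]
          intro hbb
          have := h3 b hb z hz hbz
          have h4 := dist_triangle_right b z x
          rw [mem_ball] at hbb hzb
          linarith
      · push Not at hex
        rw [Finset.sum_eq_zero]
        · exact zero_le
        · intro b hb
          rw [Measure.dirac_apply' _ measurableSet_ball, Set.indicator_of_notMem (hex b hb)]
    simp only [Measure.smul_apply, Measure.finsetSum_apply, smul_eq_mul]
    rw [← mul_assoc, ← ENNReal.mul_inv (Or.inl hm0) (Or.inl (ENNReal.natCast_ne_top m)),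
      ← pow_succ']
    gcongr
end

section
/- Let (X,d) be a nonempty compact metric space and let f : X → X be a continuous surjection. Suppose that for every x ∈ X there exist a positive integer m(x), a real number δ(x) > 0 and a real number ε(x) > 0 such that for every y ∈ X with d(y,x) < ε(x) there exist u, v ∈ X with f^{m(x)}(u) = f^{m(x)}(v) = y and d(u,v) ≥ δ(x). Then there exist a positive integer m and δ > 0 such that for every y ∈ X there exist u, v ∈ X with f^m(u) = f^m(v) = y and d(u,v) ≥ δ. -/
open Function

theorem lift_aux {X : Type*} [MetricSpace X] [CompactSpace X]
    (f : X → X) (hfc : Continuous f) (hfs : Function.Surjective f) (m k : ℕ) (δ : ℝ)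
    (hδ : 0 < δ) : ∃ δ' : ℝ, 0 < δ' ∧ ∀ y : X,
      (∃ u v : X, f^[m] u = y ∧ f^[m] v = y ∧ δ ≤ dist u v) →
      ∃ u v : X, f^[m + k] u = y ∧ f^[m + k] v = y ∧ δ' ≤ dist u v := by
  obtain ⟨δ', h0, h⟩ := Metric.uniformContinuous_iff.1
    (CompactSpace.uniformContinuous_of_continuous (hfc.iterate k)) δ hδ
  refine ⟨δ', h0, ?_⟩
  rintro y ⟨u, v, hu, hv, huv⟩
  obtain ⟨u', rfl⟩ := hfs.iterate k u
  obtain ⟨v', rfl⟩ := hfs.iterate k v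
  refine ⟨u', v', ?_, ?_, ?_⟩
  · rw [Function.iterate_add_apply, hu]
  · rw [Function.iterate_add_apply, hv]
  · by_contra hc
    exact absurd (h (not_le.1 hc)) (not_lt.2 huv)

/-- For a continuous surjection of a nonempty compact metric space, a
pointwise local two-separated-preimage property (under some iterate, locally near each
point) can be uniformized: there are a single iterate `f^m` and a single separation
constant `δ > 0` valid at all points. -/
theorem exists_uniform_separated_preimages_of_pointwise
    (X : Type*) [MetricSpace X] [CompactSpace X] [Nonempty X]
    (f : X → X) (hfc : Continuous f) (hfs : Function.Surjective f)
    (H : ∀ x : X, ∃ m : ℕ, 0 < m ∧ ∃ δ : ℝ, 0 < δ ∧ ∃ ε : ℝ, 0 < ε ∧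
      ∀ y : X, dist y x < ε →
        ∃ u v : X, f^[m] u = y ∧ f^[m] v = y ∧ δ ≤ dist u v) :
    ∃ m : ℕ, 0 < m ∧ ∃ δ : ℝ, 0 < δ ∧
      ∀ y : X, ∃ u v : X, f^[m] u = y ∧ f^[m] v = y ∧ δ ≤ dist u v := by
  have key : ∃ m : ℕ, 0 < m ∧ ∃ δ : ℝ, 0 < δ ∧
      ∀ y ∈ (Set.univ : Set X), ∃ u v : X, f^[m] u = y ∧ f^[m] v = y ∧ δ ≤ dist u v := by
    refine isCompact_univ.induction_on (p := fun s : Set X => ∃ m : ℕ, 0 < m ∧ ∃ δ : ℝ, 0 < δ ∧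
      ∀ y ∈ s, ∃ u v : X, f^[m] u = y ∧ f^[m] v = y ∧ δ ≤ dist u v) ?_ ?_ ?_ ?_
    · exact ⟨1, one_pos, 1, one_pos, fun y hy => absurd hy (Set.notMem_empty y)⟩
    · rintro s t hst ⟨m, hm, δ, hδ, h⟩
      exact ⟨m, hm, δ, hδ, fun y hy => h y (hst hy)⟩
    · rintro s t ⟨m, hm, δ, hδ, h⟩ ⟨n, hn, η, hη, h2⟩
      obtain ⟨a, ha, hA⟩ := lift_aux f hfc hfs m n δ hδ
      obtain ⟨b, hb, hB⟩ := lift_aux f hfc hfs n m η hη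
      refine ⟨m + n, by omega, min a b, lt_min ha hb, ?_⟩
      rintro y (hy | hy)
      · obtain ⟨u, v, hu, hv, huv⟩ := hA y (h y hy)
        exact ⟨u, v, hu, hv, (min_le_left _ _).trans huv⟩
      · obtain ⟨u, v, hu, hv, huv⟩ := hB y (h2 y hy)
        rw [add_comm n m] at hu hv
        exact ⟨u, v, hu, hv, (min_le_right _ _).trans huv⟩
    · intro x _
      obtain ⟨m, hm, δ, hδ, ε, hε, h⟩ := H x
      exact ⟨Metric.ball x ε, mem_nhdsWithin_of_mem_nhds (Metric.ball_mem_nhds x hε),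
        m, hm, δ, hδ, fun y hy => h y hy⟩
  obtain ⟨m, hm, δ, hδ, h⟩ := key
  exact ⟨m, hm, δ, hδ, fun y => h y (Set.mem_univ y)⟩
end

section
/- Let (X,d) be a compact metric space, let f : X → X be a map and let δ > 0. Let (y_k)_{k≥0} be a sequence in X with f(y_{k+1}) = y_k for all k ≥ 0, and suppose that for every k ≥ 0 and every z ∈ X with d(y_k, z) < δ one has d(f(y_k), f(z)) ≤ d(y_k, z)/2. Then the points y_k are not pairwise distinct; that is, there exist indices k ≠ l with y_k = y_l. -/
/-- In a compact metric space, a backward orbit along which `f` contracts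
distances by a factor `1/2` at scale `δ` cannot consist of pairwise distinct points. -/
theorem backward_orbit_not_injective_of_contracting
    (X : Type*) [MetricSpace X] [CompactSpace X]
    (f : X → X) (δ : ℝ) (hδ : 0 < δ)
    (y : ℕ → X) (hback : ∀ k : ℕ, f (y (k + 1)) = y k)
    (hcontr : ∀ k : ℕ, ∀ z : X, dist (y k) z < δ →
      dist (f (y k)) (f z) ≤ dist (y k) z / 2) :
    ∃ k l : ℕ, k ≠ l ∧ y k = y l := by
  by_contra! hne
  have key : ∀ m a b : ℕ, dist (y (a + m)) (y (b + m)) < δ →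
      dist (y a) (y b) ≤ dist (y (a + m)) (y (b + m)) / 2 ^ m := by
    intro m
    induction m with
    | zero => intro a b _; simp
    | succ m ih =>
      intro a b h
      have h1 := hcontr (a + (m + 1)) (y (b + (m + 1))) h
      rw [← add_assoc, ← add_assoc, hback, hback] at h1
      rw [← add_assoc, ← add_assoc] at h ⊢
      have h0 : 0 ≤ dist (y (a + m + 1)) (y (b + m + 1)) := dist_nonneg
      refine (ih a b (by linarith)).trans ?_
      rw [pow_succ', ← div_div]
      gcongr
  obtain ⟨t, -, htf, ht⟩ := Metric.totallyBounded_iff.1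
    (isCompact_univ (X := X)).totallyBounded (δ / 2) (by linarith) |>.imp
      (fun t h => (⟨trivial, h.1, h.2⟩ : True ∧ _ ∧ _))
  have hc : ∀ n, ∃ c ∈ t, dist (y n) c < δ / 2 := by
    intro n
    simpa using ht (Set.mem_univ (y n))
  choose c hct hcd using hc
  set N := htf.toFinset.card + 1 with hN
  have hlim : Filter.Tendsto (fun n : ℕ => δ / 2 ^ n) Filter.atTop (nhds 0) := by
    have := (tendsto_pow_atTop_nhds_zero_of_lt_one (r := (1 / 2 : ℝ))
      (by norm_num) (by norm_num)).const_mul δ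
    simpa [div_eq_mul_inv] using this
  have hev : ∀ᶠ n : ℕ in Filter.atTop, ∀ p ∈ Finset.Icc 1 N,
      δ / 2 ^ n < dist (y 0) (y p) := by
    rw [Filter.eventually_all_finset]
    intro p hp
    have hp1 := (Finset.mem_Icc.1 hp).1
    exact hlim.eventually_lt_const (dist_pos.2 (hne 0 p (by omega)))
  obtain ⟨n, hn⟩ := hev.exists
  obtain ⟨i, hi, j, hj, hij, hcij⟩ := Finset.exists_ne_map_eq_of_card_lt_of_maps_to
    (s := Finset.range N) (t := htf.toFinset) (f := fun i => c (n + i))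
    (by simp [hN]) (by intro i _; simp [hct])
  have fin : ∀ i j : ℕ, i < j → j < N → c (n + i) = c (n + j) → False := by
    intro i j hij hj hc
    have hd : dist (y (n + i)) (y (n + j)) < δ := by
      have h1 := hcd (n + i)
      have h2 := hcd (n + j)
      rw [hc] at h1
      have := dist_triangle_right (y (n + i)) (y (n + j)) (c (n + j))
      linarith
    have hp := hn (j - i) (Finset.mem_Icc.2 ⟨by omega, by omega⟩)
    have h3 := key (n + i) 0 (j - i)
    rw [show 0 + (n + i) = n + i by omega, show j - i + (n + i) = n + j by omega] at h3
    have h4 := h3 hd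
    have h5 : dist (y (n + i)) (y (n + j)) / 2 ^ (n + i) ≤ δ / 2 ^ n := by
      gcongr
      · norm_num
      · omega
    linarith
  rw [Finset.mem_range] at hi hj
  rcases lt_or_gt_of_ne hij with h | h
  · exact fin i j h hj hcij
  · exact fin j i h hi hcij.symm
end

section
/- Let (X,d) be a compact metric space, let f : X → X be continuous, let x_0 ∈ X and put x_k := f^k(x_0) for k ∈ ℕ. Suppose there exist δ > 0 and k_0 ∈ ℕ such that for every k ≥ k_0 and every y ∈ X with d(y, x_k) ≤ δ one has d(f(y), f(x_k)) ≤ d(y, x_k)/2. If there exist integers l ≥ k_0 and p ≥ 1 with d(x_{l+p}, x_l) ≤ δ, then d(x_{l+(j+1)p}, x_{l+jp}) ≤ δ/2^{jp} for all j ≥ 0, the sequence (x_{l+jp})_{j∈ℕ} is a Cauchy sequence, and it converges to a point ξ ∈ X satisfying f^p(ξ) = ξ. -/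
open Filter Function

/-- If `f` contracts by a factor `1/2` at scale `δ` along the tail of the
forward orbit of `x₀`, and two orbit points `x_{l+p}` and `x_l` (with `l ≥ k₀`, `p ≥ 1`) are
within distance `δ`, then the distances `d(x_{l+(j+1)p}, x_{l+jp})` decay like `δ/2^{jp}`,
the sequence `(x_{l+jp})_j` is Cauchy, and it converges to a periodic point `ξ` with
`f^p(ξ) = ξ`. -/
theorem orbit_subsequence_cauchy_tendsto_periodic
    (X : Type*) [MetricSpace X] [CompactSpace X]
    (f : X → X) (hfc : Continuous f) (x₀ : X)
    (δ : ℝ) (hδ : 0 < δ) (k₀ : ℕ)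
    (hcontr : ∀ k : ℕ, k₀ ≤ k → ∀ y : X, dist y (f^[k] x₀) ≤ δ →
      dist (f y) (f (f^[k] x₀)) ≤ dist y (f^[k] x₀) / 2)
    (l p : ℕ) (hl : k₀ ≤ l) (hp : 1 ≤ p)
    (hclose : dist (f^[l + p] x₀) (f^[l] x₀) ≤ δ) :
    (∀ j : ℕ, dist (f^[l + (j + 1) * p] x₀) (f^[l + j * p] x₀) ≤ δ / 2 ^ (j * p)) ∧
    CauchySeq (fun j : ℕ => f^[l + j * p] x₀) ∧
    ∃ ξ : X, Filter.Tendsto (fun j : ℕ => f^[l + j * p] x₀) Filter.atTop (nhds ξ) ∧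
      f^[p] ξ = ξ := by
  have key : ∀ n : ℕ, dist (f^[l + p + n] x₀) (f^[l + n] x₀) ≤ δ / 2 ^ n := by
    intro n
    induction n with
    | zero => simpa using hclose
    | succ n ih =>
      have h1 : δ / 2 ^ n ≤ δ := div_le_self hδ.le (one_le_pow₀ (by norm_num))
      have h2 := hcontr (l + n) (by omega) (f^[l + p + n] x₀) (ih.trans h1)
      rw [← add_assoc, ← add_assoc, iterate_succ_apply', iterate_succ_apply', pow_succ,
        ← div_div]
      linarith
  have hstep : ∀ j : ℕ,
      dist (f^[l + (j + 1) * p] x₀) (f^[l + j * p] x₀) ≤ δ / 2 ^ (j * p) := by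
    intro j
    have h := key (j * p)
    have e : l + (j + 1) * p = l + p + j * p := by ring
    rwa [e]
  have hc : CauchySeq (fun j : ℕ => f^[l + j * p] x₀) := by
    refine cauchySeq_of_le_geometric (1 / 2) δ (by norm_num) ?_
    intro j
    rw [dist_comm]
    refine (hstep j).trans ?_
    rw [one_div, inv_pow, ← div_eq_mul_inv]
    have : j ≤ j * p := Nat.le_mul_of_pos_right j hp
    gcongr
    norm_num
  refine ⟨hstep, hc, ?_⟩
  obtain ⟨ξ, hξ⟩ := cauchySeq_tendsto_of_complete hc
  refine ⟨ξ, hξ, ?_⟩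
  have h1 := ((hfc.iterate p).tendsto ξ).comp hξ
  have h2 := hξ.comp (tendsto_add_atTop_nat 1)
  refine tendsto_nhds_unique h1 (h2.congr ?_)
  intro j
  simp only [comp_apply]
  rw [← iterate_add_apply]
  have e : l + (j + 1) * p = p + (l + j * p) := by ring
  rw [e]
end

section
/- Let X be a set, let f : X → X be a surjective map, and let x ∈ X. Define the backward orbit O^-(x) := ⋃_{j≥1} f^{-j}(x), where f^{-j}(x) denotes the preimage of x under the j-th iterate of f. If O^-(x) is a finite set, then x ∈ O^-(x); that is, there exists p ≥ 1 with f^p(x) = x. Moreover, for this p one has f^{-p}(x) = {x}, and every point y ∈ O^-(x) has exactly one preimage under f. -/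
open Function Set

/-- If `f : X → X` is surjective and the backward orbit
`O⁻(x) = ⋃_{j ≥ 1} f^{-j}(x)` of a point `x` is finite, then `x` is periodic
(`x ∈ O⁻(x)`, i.e. `f^p(x) = x` for some `p ≥ 1`), for this `p` one has
`f^{-p}(x) = {x}`, and every point of `O⁻(x)` has exactly one preimage under `f`. -/
theorem periodic_of_finite_backward_orbit
    (X : Type*) (f : X → X) (hfs : Function.Surjective f) (x : X)
    (hfin : (⋃ j : ℕ, ⋃ _ : 1 ≤ j, f^[j] ⁻¹' {x}).Finite) :
    (∃ p : ℕ, 1 ≤ p ∧ f^[p] x = x ∧ f^[p] ⁻¹' {x} = {x}) ∧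
    ∀ y ∈ ⋃ j : ℕ, ⋃ _ : 1 ≤ j, f^[j] ⁻¹' {x}, ∃! z : X, f z = y := by
  have hmem : ∀ y, y ∈ (⋃ j : ℕ, ⋃ _ : 1 ≤ j, f^[j] ⁻¹' {x}) ↔ ∃ j, 1 ≤ j ∧ f^[j] y = x := by
    intro y; simp
  generalize (⋃ j : ℕ, ⋃ _ : 1 ≤ j, f^[j] ⁻¹' {x}) = B at hfin hmem ⊢
  have hback : ∀ z, f z ∈ B → z ∈ B := by
    intro z hz
    obtain ⟨j, hj, h⟩ := (hmem _).1 hz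
    exact (hmem _).2 ⟨j + 1, by omega, by rw [Function.iterate_succ_apply]; exact h⟩
  obtain ⟨g, hg⟩ := hfs.hasRightInverse
  have hgB : MapsTo g B B := fun y hy => hback _ (by rw [hg y]; exact hy)
  have himg : g '' B = B := by
    apply Set.eq_of_subset_of_ncard_le hgB.image_subset _ hfin
    rw [Set.ncard_image_of_injective _ hg.injective]
  have hgf : ∀ z ∈ B, f z ∈ B ∧ g (f z) = z := by
    intro z hz
    rw [← himg] at hz
    obtain ⟨y, hy, rfl⟩ := hz
    rw [hg y]
    exact ⟨hy, rfl⟩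
  have hmaps : MapsTo f B B := fun z hz => (hgf z hz).1
  have hinj : InjOn f B := by
    intro a ha b hb hab
    rw [← (hgf a ha).2, ← (hgf b hb).2, hab]
  have hxB : x ∈ B := by
    obtain ⟨z, hz⟩ := hfs x
    have hzB : z ∈ B := (hmem _).2 ⟨1, le_rfl, hz⟩
    rw [← hz]
    exact hmaps hzB
  refine ⟨?_, ?_⟩
  · obtain ⟨p, hp, hpx⟩ := (hmem _).1 hxB
    refine ⟨p, hp, hpx, ?_⟩
    ext y
    simp only [mem_preimage, mem_singleton_iff]
    constructor
    · intro hy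
      exact hinj.iterate hmaps p ((hmem _).2 ⟨p, hp, hy⟩) hxB (hy.trans hpx.symm)
    · rintro rfl
      exact hpx
  · intro y hy
    refine ⟨g y, hg y, ?_⟩
    rintro z rfl
    exact (hgf z (hback z hy)).2.symm
end
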